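/- arXiv:0909.3654 — 5 statements merged into one kernel-verified Lean document; each statement's English description precedes it below -/
import Mathlib

section
/- Let n ≥ 1 and let z ∈ ℂ satisfy zⁿ = 1. Let ρ : ℤ × ℤ → GL(n,ℂ) be the homomorphism determined by ρ(1,0) = zC and ρ(0,1) = I. Then the group cohomology of ℤ × ℤ with coefficients in ℂⁿ (with the module structure given by ρ) satisfies dim_ℂ H⁰ = 1, dim_ℂ H¹ = 2, and dim_ℂ H² = 1, and likewise the group homology satisfies dim_ℂ H₀ = 1, dim_ℂ H₁ = 2, and dim_ℂ H₂ = 1. -/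
/-!
Write `a = (1, 0)`, `b = (0, 1)`, `A = ρ a`; here `ρ b = 1`.

*Cohomology.* A 2-cocycle `f` defines an extension of `ℤ × ℤ` by `V`. Any two commuting lifts of
`a` and `b` to it determine a homomorphic section, that is, a cochain trivialising `f` with
prescribed values on `a` and `b` (`exists_cochain`). For `f = 0` this shows that 1-cocycles
correspond to pairs `(c a, c b)` with `A (c b) = c b`, whence `H¹ ≅ coker (A - 1) × ker (A - 1)`
(`finrank_H1`). For general `f` it shows that `f` is a coboundary exactly when the commutator
`f (a, b) - f (b, a)` of the lifts lies in the image of `A - 1`; as cup products attain every value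
of the commutator, `H² ≅ coker (A - 1)` (`finrank_H2`). Finally `H⁰ = ker (A - 1)`.

*Homology.* The dual of the bar complex computing `H_*(G; V)` is the complex of inhomogeneous
cochains with values in `V*`, and dualising vector spaces is exact, so `dim Hᵢ(G; V) = dim Hⁱ(G; V*)`
(`finrank_groupHomology1`, `finrank_groupHomology2`). The dual representation again satisfies the
hypotheses used for cohomology. `H₀ = coker (A - 1)` is computed directly.

*Linear algebra.* All dimensions follow from `dim ker (zC - 1) = 1` (`finrank_ker_zC`), together with
rank–nullity for the cokernel and `ker (A* - 1) = (im (A - 1))⊥` for the dual representation.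
-/

open Matrix

noncomputable section

/-- The `n × n` cyclic permutation matrix `C` with `C_{i,i-1} = 1` (cyclically). -/
def Cmat (n : ℕ) [NeZero n] : Matrix (Fin n) (Fin n) ℂ := fun i k => if i = k + 1 then 1 else 0

section GroupHomology

variable {G : Type*} [Group G] {V : Type*} [AddCommGroup V] [Module ℂ V]
  (ρ : Representation ℂ G V)

/-- The degree-one differential `d₁ : ℂ[G] ⊗ V → V` of the inhomogeneous chain complex
computing group homology: `d₁(g ⊗ v) = g⁻¹·v - v`. -/
def homologyD1 : (G →₀ V) →ₗ[ℂ] V :=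
  Finsupp.lsum ℂ fun g => (ρ g⁻¹ - LinearMap.id : V →ₗ[ℂ] V)

/-- The degree-two differential `d₂(g,h ⊗ v) = h ⊗ g⁻¹·v - gh ⊗ v + g ⊗ v` of the
inhomogeneous chain complex computing group homology. -/
def homologyD2 : (G × G →₀ V) →ₗ[ℂ] (G →₀ V) :=
  Finsupp.lsum ℂ fun p =>
    (Finsupp.lsingle p.2 ∘ₗ (ρ p.1⁻¹ : V →ₗ[ℂ] V)) - Finsupp.lsingle (p.1 * p.2) +
      Finsupp.lsingle p.1

/-- The degree-three differential
`d₃(g,h,k ⊗ v) = (h,k) ⊗ g⁻¹·v - (gh,k) ⊗ v + (g,hk) ⊗ v - (g,h) ⊗ v` of the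
inhomogeneous chain complex computing group homology. -/
def homologyD3 : (G × G × G →₀ V) →ₗ[ℂ] (G × G →₀ V) :=
  Finsupp.lsum ℂ fun t =>
    (Finsupp.lsingle (t.2.1, t.2.2) ∘ₗ (ρ t.1⁻¹ : V →ₗ[ℂ] V)) -
      Finsupp.lsingle (t.1 * t.2.1, t.2.2) + Finsupp.lsingle (t.1, t.2.1 * t.2.2) -
      Finsupp.lsingle (t.1, t.2.1)

/-- The zeroth group homology `H₀(G;V)`, the coinvariants `V / im d₁`. -/
def groupHomology0 : Type _ := V ⧸ LinearMap.range (homologyD1 ρ)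

/-- The first group homology `H₁(G;V) = ker d₁ / im d₂`. -/
def groupHomology1 : Type _ :=
  LinearMap.ker (homologyD1 ρ) ⧸
    Submodule.comap (LinearMap.ker (homologyD1 ρ)).subtype (LinearMap.range (homologyD2 ρ))

/-- The second group homology `H₂(G;V) = ker d₂ / im d₃`. -/
def groupHomology2 : Type _ :=
  LinearMap.ker (homologyD2 ρ) ⧸
    Submodule.comap (LinearMap.ker (homologyD2 ρ)).subtype (LinearMap.range (homologyD3 ρ))

instance : AddCommGroup (groupHomology0 ρ) :=
  inferInstanceAs (AddCommGroup (V ⧸ LinearMap.range (homologyD1 ρ)))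
instance : Module ℂ (groupHomology0 ρ) :=
  inferInstanceAs (Module ℂ (V ⧸ LinearMap.range (homologyD1 ρ)))
instance : AddCommGroup (groupHomology1 ρ) :=
  inferInstanceAs (AddCommGroup (LinearMap.ker (homologyD1 ρ) ⧸
    Submodule.comap (LinearMap.ker (homologyD1 ρ)).subtype (LinearMap.range (homologyD2 ρ))))
instance : Module ℂ (groupHomology1 ρ) :=
  inferInstanceAs (Module ℂ (LinearMap.ker (homologyD1 ρ) ⧸
    Submodule.comap (LinearMap.ker (homologyD1 ρ)).subtype (LinearMap.range (homologyD2 ρ))))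
instance : AddCommGroup (groupHomology2 ρ) :=
  inferInstanceAs (AddCommGroup (LinearMap.ker (homologyD2 ρ) ⧸
    Submodule.comap (LinearMap.ker (homologyD2 ρ)).subtype (LinearMap.range (homologyD3 ρ))))
instance : Module ℂ (groupHomology2 ρ) :=
  inferInstanceAs (Module ℂ (LinearMap.ker (homologyD2 ρ) ⧸
    Submodule.comap (LinearMap.ker (homologyD2 ρ)).subtype (LinearMap.range (homologyD3 ρ))))

end GroupHomology

/-! ### Cocycles on `ℤ × ℤ` -/

/-- The underlying set `V × G` of the extension of `G` by `V` attached to a 2-cocycle `f`. The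
parameters `ρ` and `f` only serve to select the multiplication. -/
@[ext]
structure CocycleExt {G V : Type*} [Group G] [AddCommGroup V] [Module ℂ V]
    (ρ : Representation ℂ G V) (f : G × G → V) where
  /-- The coordinate in the abelian kernel. -/
  fib : V
  /-- The coordinate in the quotient group. -/
  base : G

/-- The 2-cocycle condition for an inhomogeneous cochain. -/
def IsTwoCocycle {G V : Type*} [Group G] [AddCommGroup V] [Module ℂ V]
    (ρ : Representation ℂ G V) (f : G × G → V) : Prop :=
  ∀ g h j : G, f (g * h, j) + f (g, h) = ρ g (f (h, j)) + f (g, h * j)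

/-- The group law `(v, g) (w, h) = (v + g • w + f (g, h), g h)`. The cocycle `f` need not be
normalised, so the unit is `(-f (1, 1), 1)`. -/
abbrev CocycleExt.group {G V : Type*} [Group G] [AddCommGroup V] [Module ℂ V]
    (ρ : Representation ℂ G V) (f : G × G → V) (hf : IsTwoCocycle ρ f) :
    Group (CocycleExt ρ f) :=
  letI : Mul (CocycleExt ρ f) :=
    ⟨fun x y => ⟨x.fib + ρ x.base y.fib + f (x.base, y.base), x.base * y.base⟩⟩
  letI : One (CocycleExt ρ f) := ⟨⟨-f (1, 1), 1⟩⟩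
  letI : Inv (CocycleExt ρ f) :=
    ⟨fun x => ⟨-f (1, 1) - ρ x.base⁻¹ x.fib - f (x.base⁻¹, x.base), x.base⁻¹⟩⟩
  Group.ofLeftAxioms
    (fun x y z => by
      refine CocycleExt.ext ?_ (mul_assoc x.base y.base z.base)
      change x.fib + ρ x.base y.fib + f (x.base, y.base) + ρ (x.base * y.base) z.fib
          + f (x.base * y.base, z.base)
        = x.fib + ρ x.base (y.fib + ρ y.base z.fib + f (y.base, z.base))
          + f (x.base, y.base * z.base)
      have h := hf x.base y.base z.base
      simp only [map_mul, map_add, Module.End.mul_apply]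
      rw [← sub_eq_zero] at h ⊢
      refine Eq.trans ?_ h
      abel)
    (fun x => by
      refine CocycleExt.ext ?_ (one_mul x.base)
      change -f (1, 1) + ρ 1 x.fib + f (1, x.base) = x.fib
      have h := (hf 1 1 x.base).symm
      simp only [map_one, Module.End.one_apply, one_mul] at h ⊢
      rw [← sub_eq_zero] at h ⊢
      refine Eq.trans ?_ h
      abel)
    (fun x => by
      refine CocycleExt.ext ?_ (inv_mul_cancel x.base)
      change -f (1, 1) - ρ x.base⁻¹ x.fib - f (x.base⁻¹, x.base) + ρ x.base⁻¹ x.fib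
        + f (x.base⁻¹, x.base) = -f (1, 1)
      abel)

/-- A subgroup of `ℤ × ℤ` containing both standard generators is everything. -/
lemma zz_mem (H : Subgroup (Multiplicative (ℤ × ℤ)))
    (ha : Multiplicative.ofAdd ((1, 0) : ℤ × ℤ) ∈ H)
    (hb : Multiplicative.ofAdd ((0, 1) : ℤ × ℤ) ∈ H) (g : Multiplicative (ℤ × ℤ)) : g ∈ H := by
  have h : g = Multiplicative.ofAdd ((1, 0) : ℤ × ℤ) ^ g.toAdd.1 *
      Multiplicative.ofAdd ((0, 1) : ℤ × ℤ) ^ g.toAdd.2 := by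
    apply Multiplicative.toAdd.injective
    ext <;> simp
  rw [h]
  exact H.mul_mem (H.zpow_mem ha _) (H.zpow_mem hb _)

section ZZ

variable {V : Type} [AddCommGroup V] [Module ℂ V]
  (ρ : Representation ℂ (Multiplicative (ℤ × ℤ)) V)

local notation "ea" => (Multiplicative.ofAdd ((1, 0) : ℤ × ℤ))
local notation "eb" => (Multiplicative.ofAdd ((0, 1) : ℤ × ℤ))

/-- A cochain trivialising a 2-cocycle `f` can be prescribed on the two generators, subject only
to the condition that the corresponding lifts `(v, a)` and `(w, b)` commute in the extension
defined by `f`: the powers of commuting lifts give a section that is a homomorphism. -/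
lemma exists_cochain (f : Multiplicative (ℤ × ℤ) × Multiplicative (ℤ × ℤ) → V)
    (hf : IsTwoCocycle ρ f) (v w : V)
    (hvw : v + ρ ea w + f (ea, eb) = w + ρ eb v + f (eb, ea)) :
    ∃ c : Multiplicative (ℤ × ℤ) → V, c ea = v ∧ c eb = w ∧
      ∀ g h, c (g * h) = c g + ρ g (c h) + f (g, h) := by
  let _ := CocycleExt.group ρ f hf
  let A : CocycleExt ρ f := ⟨v, ea⟩
  let B : CocycleExt ρ f := ⟨w, eb⟩
  have hAB : Commute A B := CocycleExt.ext hvw (mul_comm ea eb)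
  let s : Multiplicative (ℤ × ℤ) → CocycleExt ρ f := fun g => A ^ g.toAdd.1 * B ^ g.toAdd.2
  have hs : ∀ g h, s (g * h) = s g * s h := by
    intro g h
    simp only [s, toAdd_mul, Prod.fst_add, Prod.snd_add, _root_.zpow_add]
    have := (hAB.zpow_zpow h.toAdd.1 g.toAdd.2).eq
    simp only [mul_assoc]
    rw [← mul_assoc (A ^ _) (B ^ (Multiplicative.toAdd g).2), this, mul_assoc]
  let π : CocycleExt ρ f →* Multiplicative (ℤ × ℤ) :=
    MonoidHom.mk' CocycleExt.base fun _ _ => rfl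
  have hb : ∀ g, (s g).base = g := by
    intro g
    change π (A ^ g.toAdd.1 * B ^ g.toAdd.2) = g
    rw [map_mul, map_zpow, map_zpow]
    change ea ^ g.toAdd.1 * eb ^ g.toAdd.2 = g
    apply Multiplicative.toAdd.injective
    ext <;> simp
  have hA : s ea = A := by simp [s]
  have hB : s eb = B := by simp [s]
  refine ⟨fun g => (s g).fib, by simp only [hA, A], by simp only [hB, B], fun g h => ?_⟩
  have h1 := congrArg CocycleExt.fib (hs g h)
  change (s (g * h)).fib = (s g).fib + ρ (s g).base (s h).fib + f ((s g).base, (s h).base) at h1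
  rwa [hb, hb] at h1

/-- A 1-cocycle is determined by its values on the generators. -/
lemma cocycle_eq_zero (c : Multiplicative (ℤ × ℤ) → V)
    (hc : ∀ g h, c (g * h) = ρ g (c h) + c g) (ha : c ea = 0) (hb : c eb = 0)
    (g : Multiplicative (ℤ × ℤ)) : c g = 0 := by
  have h1 : c 1 = 0 := by simpa using hc 1 1
  let H : Subgroup (Multiplicative (ℤ × ℤ)) :=
    { carrier := {g | c g = 0}
      one_mem' := h1
      mul_mem' := fun {x y} hx hy => by
        change c x = 0 at hx
        change c y = 0 at hy
        change c (x * y) = 0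
        rw [hc, hx, hy, map_zero, add_zero]
      inv_mem' := fun {x} hx => by
        change c x = 0 at hx
        change c x⁻¹ = 0
        have := hc x⁻¹ x
        rw [inv_mul_cancel, h1, hx, map_zero, zero_add] at this
        exact this.symm }
  exact zz_mem H ha hb g

/-- `dim H⁰ = dim ker (A - 1)`. -/
lemma finrank_H0 (hb : ρ eb = LinearMap.id) :
    Module.finrank ℂ (groupCohomology (Rep.of ρ) 0) =
      Module.finrank ℂ (LinearMap.ker (ρ ea - LinearMap.id)) := by
  rw [(groupCohomology.H0Iso (Rep.of ρ)).toLinearEquiv.finrank_eq]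
  have : ρ.invariants = LinearMap.ker (ρ ea - LinearMap.id) := by
    ext v
    rw [Representation.mem_invariants, LinearMap.mem_ker, LinearMap.sub_apply, LinearMap.id_apply,
      sub_eq_zero]
    refine ⟨fun h => h _, fun h g => ?_⟩
    refine sub_eq_zero.1 (cocycle_eq_zero ρ (fun g => ρ g v - v) (fun g h => ?_) ?_ ?_ g)
    · simp [map_mul]
    · simp [h]
    · simp [hb]
  change Module.finrank ℂ ρ.invariants = _
  rw [this]

/-- The evaluation map `c ↦ (c(a) mod (A - 1), c(b))`; on 1-cocycles the second coordinate lies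
in the kernel of `A - 1` when `b` acts trivially. -/
def evalOne (hb : ρ eb = LinearMap.id) :
    groupCohomology.cocycles₁ (Rep.of ρ) →ₗ[ℂ]
      (V ⧸ LinearMap.range (ρ ea - LinearMap.id)) × LinearMap.ker (ρ ea - LinearMap.id) :=
  LinearMap.prod
    ((LinearMap.range (ρ ea - LinearMap.id)).mkQ ∘ₗ LinearMap.proj ea ∘ₗ Submodule.subtype _)
    (LinearMap.codRestrict _ (LinearMap.proj eb ∘ₗ Submodule.subtype _) fun c => by
      have hc := (groupCohomology.mem_cocycles₁_iff _).1 c.2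
      have h1 := hc ea eb
      have h2 := hc eb ea
      rw [mul_comm, h2] at h1
      change ρ eb (c.1 ea) + c.1 eb = ρ ea (c.1 eb) + c.1 ea at h1
      rw [hb, LinearMap.id_apply, add_comm, add_left_inj] at h1
      change ρ ea (c.1 eb) - c.1 eb = 0
      rw [← h1, sub_self])

lemma finrank_H1 [FiniteDimensional ℂ V] (hb : ρ eb = LinearMap.id) :
    Module.finrank ℂ (groupCohomology (Rep.of ρ) 1) =
      Module.finrank ℂ (V ⧸ LinearMap.range (ρ ea - LinearMap.id)) +
      Module.finrank ℂ (LinearMap.ker (ρ ea - LinearMap.id)) := by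
  have hsurj : Function.Surjective (evalOne ρ hb) := by
    rintro ⟨q, w, hw⟩
    obtain ⟨v, rfl⟩ := Submodule.mkQ_surjective _ q
    have hw' : ρ ea w = w := sub_eq_zero.1 hw
    obtain ⟨c, h1, h2, h3⟩ := exists_cochain ρ 0 (fun _ _ _ => by simp) v w (by
      simp [hb, hw', add_comm])
    refine ⟨⟨c, (groupCohomology.mem_cocycles₁_iff _).2 fun g h => ?_⟩, ?_⟩
    · have := h3 g h
      rw [Pi.zero_apply, add_zero, add_comm] at this
      exact this
    · exact Prod.ext (congrArg (Submodule.mkQ _) h1) (Subtype.ext h2)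
  have hker : LinearMap.ker (evalOne ρ hb) =
      LinearMap.ker (groupCohomology.H1π (Rep.of ρ)).hom := by
    ext c
    rw [LinearMap.mem_ker, LinearMap.mem_ker]
    refine Iff.trans ?_ (groupCohomology.H1π_eq_zero_iff (A := Rep.of ρ) c).symm
    have hc : ∀ g h, c.1 (g * h) = ρ g (c.1 h) + c.1 g :=
      (groupCohomology.mem_cocycles₁_iff (A := Rep.of ρ) _).1 c.2
    constructor
    · intro h
      obtain ⟨v, hv⟩ := (Submodule.Quotient.mk_eq_zero _).1 (congrArg Prod.fst h)
      have h2 : c.1 eb = 0 := congrArg (fun x => (Prod.snd x).1) h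
      change ρ ea v - v = c.1 ea at hv
      refine ⟨v, funext fun g => ?_⟩
      change ρ g v - v = c.1 g
      refine sub_eq_zero.1 (cocycle_eq_zero ρ (fun g => ρ g v - v - c.1 g) (fun g h => ?_) ?_ ?_ g)
      · simp only [hc, map_mul, map_sub, Module.End.mul_apply]
        abel
      · simp [hv]
      · simp [hb, h2]
    · rintro ⟨v, hv⟩
      have hv' : ∀ g, ρ g v - v = c.1 g := fun g => congrFun hv g
      refine Prod.ext ((Submodule.Quotient.mk_eq_zero _).2 ⟨v, hv' ea⟩) (Subtype.ext ?_)
      change c.1 eb = 0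
      rw [← hv', hb, LinearMap.id_apply, sub_self]
  have hπ : Function.Surjective (groupCohomology.H1π (Rep.of ρ)).hom :=
    (ModuleCat.epi_iff_surjective _).1 inferInstance
  rw [← Module.finrank_prod, ← (LinearMap.quotKerEquivOfSurjective _ hπ).finrank_eq,
    ← (LinearMap.quotKerEquivOfSurjective _ hsurj).finrank_eq, hker]

/-- The map `f ↦ f(a, b) - f(b, a)` modulo the image of `A - 1`: the class of the commutator of
lifts of the two generators to the extension defined by `f`. -/
def evalTwo : groupCohomology.cocycles₂ (Rep.of ρ) →ₗ[ℂ]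
    V ⧸ LinearMap.range (ρ ea - LinearMap.id) :=
  (LinearMap.range (ρ ea - LinearMap.id)).mkQ ∘ₗ
    (LinearMap.proj (R := ℂ) (φ := fun _ => V) (ea, eb) - LinearMap.proj (eb, ea)) ∘ₗ
      Submodule.subtype _

lemma finrank_H2 (hb : ρ eb = LinearMap.id) :
    Module.finrank ℂ (groupCohomology (Rep.of ρ) 2) =
      Module.finrank ℂ (V ⧸ LinearMap.range (ρ ea - LinearMap.id)) := by
  have hsurj : Function.Surjective (evalTwo ρ) := by
    intro q
    obtain ⟨v, rfl⟩ := Submodule.mkQ_surjective _ q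
    -- The preimage is the cup product of the second projection `ℤ × ℤ → ℤ` with a 1-cocycle.
    obtain ⟨c, h1, h2, h3⟩ := exists_cochain ρ 0 (fun _ _ _ => by simp) (-v) 0 (by simp [hb])
    simp only [Pi.zero_apply, add_zero] at h3
    let f : Multiplicative (ℤ × ℤ) × Multiplicative (ℤ × ℤ) → V :=
      fun p => (p.1.toAdd.2) • ρ p.1 (c p.2)
    refine ⟨⟨f, (groupCohomology.mem_cocycles₂_iff _).2 fun g h j => ?_⟩, ?_⟩
    · change (g * h).toAdd.2 • ρ (g * h) (c j) + g.toAdd.2 • ρ g (c h) =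
        ρ g (h.toAdd.2 • ρ h (c j)) + g.toAdd.2 • ρ g (c (h * j))
      simp only [h3, toAdd_mul, Prod.snd_add, map_mul, map_add, map_zsmul, Module.End.mul_apply,
        add_smul, smul_add]
      abel
    · refine congrArg (LinearMap.range (ρ ea - LinearMap.id)).mkQ (?_ : f (ea, eb) - f (eb, ea) = v)
      simp [f, h1, h2, hb]
  have hker : LinearMap.ker (evalTwo ρ) =
      LinearMap.ker (groupCohomology.H2π (Rep.of ρ)).hom := by
    ext f
    rw [LinearMap.mem_ker, LinearMap.mem_ker]
    refine Iff.trans ?_ (groupCohomology.H2π_eq_zero_iff (A := Rep.of ρ) f).symm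
    have hf : IsTwoCocycle ρ f.1 := (groupCohomology.mem_cocycles₂_iff (A := Rep.of ρ) _).1 f.2
    constructor
    · intro h
      obtain ⟨u, hu⟩ := (Submodule.Quotient.mk_eq_zero _).1 h
      change ρ ea u - u = f.1 (ea, eb) - f.1 (eb, ea) at hu
      obtain ⟨c, h1, h2, h3⟩ := exists_cochain ρ f.1 hf 0 (-u) (by
        rw [← sub_eq_zero] at hu ⊢
        refine Eq.trans ?_ (neg_eq_zero.2 hu)
        simp only [map_zero, map_neg]
        abel)
      refine ⟨-c, funext fun p => ?_⟩
      change ρ p.1 (-c p.2) - (-c (p.1 * p.2)) + -c p.1 = f.1 p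
      rw [h3, map_neg]
      abel
    · rintro ⟨c, hc⟩
      have hc' : ∀ g h, ρ g (c h) - c (g * h) + c g = f.1 (g, h) := fun g h => congrFun hc (g, h)
      refine (Submodule.Quotient.mk_eq_zero _).2 ⟨c eb, ?_⟩
      change ρ ea (c eb) - c eb = f.1 (ea, eb) - f.1 (eb, ea)
      rw [← hc', ← hc', mul_comm eb ea, hb, LinearMap.id_apply]
      abel
  have hπ : Function.Surjective (groupCohomology.H2π (Rep.of ρ)).hom :=
    (ModuleCat.epi_iff_surjective _).1 inferInstance
  rw [← (LinearMap.quotKerEquivOfSurjective _ hπ).finrank_eq,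
    ← (LinearMap.quotKerEquivOfSurjective _ hsurj).finrank_eq, hker]

end ZZ

/-! ### Homology as the dual of cohomology -/

/-- The homology of `X → Y → Z` at `Y` has the same dimension as the cohomology of the dual
complex. The dual complex is presented by a model `P` of the dual of `Y`, the submodule `C` of
cocycles in it and a surjection `π` from `C` whose kernel consists of the coboundaries. -/
lemma finrank_homology_eq {X Y Z P H : Type*} [AddCommGroup X] [Module ℂ X] [AddCommGroup Y]
    [Module ℂ Y] [AddCommGroup Z] [Module ℂ Z] [AddCommGroup P] [Module ℂ P] [AddCommGroup H]
    [Module ℂ H] (f : X →ₗ[ℂ] Y) (g : Y →ₗ[ℂ] Z) (hgf : g ∘ₗ f = 0)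
    (e : P ≃ₗ[ℂ] (Y →ₗ[ℂ] ℂ)) (C : Submodule ℂ P) (hC : ∀ p, p ∈ C ↔ e p ∘ₗ f = 0)
    (π : C →ₗ[ℂ] H) (hπ : Function.Surjective π)
    (hk : ∀ p : C, π p = 0 ↔ ∃ ψ : Z →ₗ[ℂ] ℂ, ψ ∘ₗ g = e p) :
    Module.finrank ℂ (LinearMap.ker g ⧸
      Submodule.comap (LinearMap.ker g).subtype (LinearMap.range f)) = Module.finrank ℂ H := by
  set W := Submodule.comap (LinearMap.ker g).subtype (LinearMap.range f) with hW
  let L : C →ₗ[ℂ] W.dualAnnihilator :=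
    LinearMap.codRestrict _ ((LinearMap.ker g).subtype.dualMap ∘ₗ e.toLinearMap ∘ₗ C.subtype) <| by
      intro p
      rw [Submodule.mem_dualAnnihilator]
      rintro ⟨y, hy⟩ ⟨x, hx⟩
      change f x = y at hx
      change e p.1 y = 0
      rw [← hx]
      exact LinearMap.congr_fun ((hC p.1).1 p.2) x
  have hL : ∀ (p : C) (y : LinearMap.ker g), (L p).1 y = e p.1 y.1 := fun _ _ => rfl
  have hLs : Function.Surjective L := by
    rintro ⟨ψ, hψ⟩
    obtain ⟨φ, hφ⟩ := LinearMap.dualMap_surjective_of_injective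
      (LinearMap.ker g).injective_subtype ψ
    have hφ' : ∀ y : LinearMap.ker g, φ y.1 = ψ y := fun y => LinearMap.congr_fun hφ y
    refine ⟨⟨e.symm φ, (hC _).2 (LinearMap.ext fun x => ?_)⟩, ?_⟩
    · have hx : f x ∈ LinearMap.ker g := LinearMap.congr_fun hgf x
      rw [LinearEquiv.apply_symm_apply]
      exact (hφ' ⟨f x, hx⟩).trans ((Submodule.mem_dualAnnihilator _).1 hψ ⟨f x, hx⟩ ⟨x, rfl⟩)
    · refine Subtype.ext (LinearMap.ext fun y => ?_)
      rw [hL, LinearEquiv.apply_symm_apply]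
      exact hφ' y
  have hker : LinearMap.ker L = LinearMap.ker π := by
    ext p
    rw [LinearMap.mem_ker, LinearMap.mem_ker, hk]
    have h := LinearMap.range_dualMap_eq_dualAnnihilator_ker g
    have h2 : (∃ ψ : Z →ₗ[ℂ] ℂ, ψ ∘ₗ g = e p) ↔ e p.1 ∈ (LinearMap.ker g).dualAnnihilator := by
      rw [← h]; rfl
    rw [h2, Submodule.mem_dualAnnihilator]
    constructor
    · intro h0 y hy
      rw [← hL p ⟨y, hy⟩, h0]; rfl
    · intro h0
      refine Subtype.ext (LinearMap.ext fun y => ?_)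
      rw [hL]
      exact h0 _ y.2
  rw [← Subspace.dual_finrank_eq, W.dualQuotEquivDualAnnihilator.finrank_eq,
    ← (LinearMap.quotKerEquivOfSurjective _ hLs).finrank_eq,
    ← (LinearMap.quotKerEquivOfSurjective _ hπ).finrank_eq, hker]

section Duality

variable {G : Type} [Group G] {V : Type} [AddCommGroup V] [Module ℂ V]
  (ρ : Representation ℂ G V)

lemma homologyD1_single (g : G) (v : V) :
    homologyD1 ρ (Finsupp.single g v) = ρ g⁻¹ v - v := by
  simp [homologyD1]

lemma homologyD2_single (g h : G) (v : V) :
    homologyD2 ρ (Finsupp.single (g, h) v) =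
      Finsupp.single h (ρ g⁻¹ v) - Finsupp.single (g * h) v + Finsupp.single g v := by
  simp [homologyD2]

lemma homologyD3_single (g h k : G) (v : V) :
    homologyD3 ρ (Finsupp.single (g, h, k) v) =
      Finsupp.single (h, k) (ρ g⁻¹ v) - Finsupp.single (g * h, k) v +
        Finsupp.single (g, h * k) v - Finsupp.single (g, h) v := by
  simp [homologyD3]

lemma homologyD1_comp_D2 : homologyD1 ρ ∘ₗ homologyD2 ρ = 0 := by
  refine Finsupp.lhom_ext fun p v => ?_
  obtain ⟨g, h⟩ := p
  rw [LinearMap.comp_apply, homologyD2_single]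
  simp only [map_add, map_sub, homologyD1_single, _root_.mul_inv_rev, map_mul, Module.End.mul_apply,
    LinearMap.zero_apply]
  abel

lemma homologyD2_comp_D3 : homologyD2 ρ ∘ₗ homologyD3 ρ = 0 := by
  refine Finsupp.lhom_ext fun p v => ?_
  obtain ⟨g, h, k⟩ := p
  rw [LinearMap.comp_apply, homologyD3_single]
  simp only [map_add, map_sub, homologyD2_single, _root_.mul_inv_rev, map_mul, Module.End.mul_apply,
    LinearMap.zero_apply, mul_assoc]
  abel

/-- Functions on `S` with values in `V*` are the functionals on the finitely supported functions
from `S` to `V`. -/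
abbrev pairing (S : Type) : (S → Module.Dual ℂ V) ≃ₗ[ℂ] ((S →₀ V) →ₗ[ℂ] ℂ) :=
  Finsupp.lsum (M := V) (N := ℂ) (R := ℂ) (α := S) ℂ

/-- `dim H₁(G; V) = dim H¹(G; V*)`. -/
lemma finrank_groupHomology1 :
    Module.finrank ℂ (groupHomology1 ρ) =
      Module.finrank ℂ (groupCohomology (Rep.of ρ.dual) 1) := by
  refine finrank_homology_eq (homologyD2 ρ) (homologyD1 ρ) (homologyD1_comp_D2 ρ) (pairing G)
    (groupCohomology.cocycles₁ (Rep.of ρ.dual)) (fun c => ?_)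
    (groupCohomology.H1π (Rep.of ρ.dual)).hom
    ((ModuleCat.epi_iff_surjective _).1 inferInstance) (fun c => ?_)
  · rw [groupCohomology.mem_cocycles₁_def]
    constructor
    · intro h
      refine Finsupp.lhom_ext fun p v => ?_
      have := LinearMap.congr_fun (h p.1 p.2) v
      change c p.2 (ρ p.1⁻¹ v) - c (p.1 * p.2) v + c p.1 v = 0 at this
      rw [LinearMap.comp_apply, homologyD2_single, LinearMap.zero_apply]
      simpa only [map_add, map_sub, Finsupp.lsum_single] using this
    · intro h g k
      refine LinearMap.ext fun v => ?_
      have := LinearMap.congr_fun h (Finsupp.single (g, k) v)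
      rw [LinearMap.comp_apply, homologyD2_single] at this
      simp only [map_add, map_sub, Finsupp.lsum_single] at this
      exact this
  · refine (groupCohomology.H1π_eq_zero_iff (A := Rep.of ρ.dual) c).trans ?_
    refine exists_congr fun ψ => ?_
    constructor
    · intro h
      refine Finsupp.lhom_ext fun g v => ?_
      have : ψ (ρ g⁻¹ v) - ψ v = c.1 g v := LinearMap.congr_fun (congrFun h g) v
      rw [LinearMap.comp_apply, homologyD1_single, Finsupp.lsum_single, map_sub]
      exact this
    · intro h
      refine funext fun g => LinearMap.ext fun v => ?_
      have := LinearMap.congr_fun h (Finsupp.single g v)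
      rw [LinearMap.comp_apply, homologyD1_single, Finsupp.lsum_single, map_sub] at this
      exact this

/-- `dim H₂(G; V) = dim H²(G; V*)`. -/
lemma finrank_groupHomology2 :
    Module.finrank ℂ (groupHomology2 ρ) =
      Module.finrank ℂ (groupCohomology (Rep.of ρ.dual) 2) := by
  refine finrank_homology_eq (homologyD3 ρ) (homologyD2 ρ) (homologyD2_comp_D3 ρ) (pairing (G × G))
    (groupCohomology.cocycles₂ (Rep.of ρ.dual)) (fun c => ?_)
    (groupCohomology.H2π (Rep.of ρ.dual)).hom
    ((ModuleCat.epi_iff_surjective _).1 inferInstance) (fun c => ?_)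
  · rw [groupCohomology.mem_cocycles₂_def]
    constructor
    · intro h
      refine Finsupp.lhom_ext fun p v => ?_
      obtain ⟨g, k, l⟩ := p
      have := LinearMap.congr_fun (h g k l) v
      change c (k, l) (ρ g⁻¹ v) - c (g * k, l) v + c (g, k * l) v - c (g, k) v = 0 at this
      rw [LinearMap.comp_apply, homologyD3_single, LinearMap.zero_apply]
      simpa only [map_add, map_sub, Finsupp.lsum_single] using this
    · intro h g k l
      refine LinearMap.ext fun v => ?_
      have := LinearMap.congr_fun h (Finsupp.single (g, k, l) v)
      rw [LinearMap.comp_apply, homologyD3_single] at this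
      simp only [map_add, map_sub, Finsupp.lsum_single] at this
      exact this
  · refine (groupCohomology.H2π_eq_zero_iff (A := Rep.of ρ.dual) c).trans ?_
    refine (pairing G).toEquiv.exists_congr fun q => ?_
    constructor
    · intro h
      refine Finsupp.lhom_ext fun p v => ?_
      obtain ⟨g, k⟩ := p
      have : q k (ρ g⁻¹ v) - q (g * k) v + q g v = c.1 (g, k) v :=
        LinearMap.congr_fun (congrFun h (g, k)) v
      rw [LinearMap.comp_apply, homologyD2_single, Finsupp.lsum_single, LinearEquiv.coe_toEquiv]
      simpa only [map_add, map_sub, Finsupp.lsum_single] using this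
    · intro h
      refine funext fun p => LinearMap.ext fun v => ?_
      have := LinearMap.congr_fun h (Finsupp.single p v)
      rw [LinearMap.comp_apply, homologyD2_single, Finsupp.lsum_single,
        LinearEquiv.coe_toEquiv] at this
      simp only [map_add, map_sub, Finsupp.lsum_single] at this
      exact this

end Duality

/-! ### Kernel and cokernel of `A - 1` -/

lemma finrank_coker_eq_ker {V : Type*} [AddCommGroup V] [Module ℂ V] [FiniteDimensional ℂ V]
    (T : V →ₗ[ℂ] V) :
    Module.finrank ℂ (V ⧸ LinearMap.range T) = Module.finrank ℂ (LinearMap.ker T) := by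
  have h1 := (LinearMap.range T).finrank_quotient_add_finrank
  have h2 := T.finrank_range_add_finrank_ker
  omega

lemma ker_dual_sub_id {G V : Type*} [Group G] [AddCommGroup V] [Module ℂ V]
    (ρ : Representation ℂ G V) (g : G) :
    LinearMap.ker (ρ.dual g - LinearMap.id) =
      (LinearMap.range (ρ g - LinearMap.id)).dualAnnihilator := by
  ext φ
  rw [LinearMap.mem_ker, Submodule.mem_dualAnnihilator]
  constructor
  · rintro h _ ⟨v, rfl⟩
    have : φ (ρ g⁻¹ (ρ g v)) - φ (ρ g v) = 0 := LinearMap.congr_fun h (ρ g v)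
    rw [Representation.inv_self_apply] at this
    rw [LinearMap.sub_apply, map_sub, LinearMap.id_apply, ← neg_sub, this, neg_zero]
  · intro h
    refine LinearMap.ext fun v => ?_
    change φ (ρ g⁻¹ v) - φ v = 0
    have := h _ ⟨ρ g⁻¹ v, rfl⟩
    rw [LinearMap.sub_apply, map_sub, LinearMap.id_apply, Representation.self_inv_apply] at this
    rw [← neg_sub, this, neg_zero]

lemma range_homologyD1 {V : Type} [AddCommGroup V] [Module ℂ V]
    (ρ : Representation ℂ (Multiplicative (ℤ × ℤ)) V)
    (hb : ρ (Multiplicative.ofAdd (0, 1)) = LinearMap.id) :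
    LinearMap.range (homologyD1 ρ) =
      LinearMap.range (ρ (Multiplicative.ofAdd (1, 0)) - LinearMap.id) := by
  apply le_antisymm
  · set W := LinearMap.range (ρ (Multiplicative.ofAdd (1, 0)) - LinearMap.id) with hW
    let H : Subgroup (Multiplicative (ℤ × ℤ)) :=
      { carrier := {g | ∀ v, ρ g v - v ∈ W}
        one_mem' := fun v => by simp
        mul_mem' := fun {x y} hx hy v => by
          have := W.add_mem (hx (ρ y v)) (hy v)
          rwa [sub_add_sub_cancel, ← Module.End.mul_apply, ← map_mul] at this
        inv_mem' := fun {x} hx v => by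
          have := W.neg_mem (hx (ρ x⁻¹ v))
          rwa [Representation.self_inv_apply, neg_sub] at this }
    rintro _ ⟨x, rfl⟩
    induction x using Finsupp.induction_linear with
    | zero => simp
    | add x y hx hy => rw [map_add]; exact W.add_mem hx hy
    | single g v =>
      rw [homologyD1_single]
      exact zz_mem H (fun v => ⟨v, rfl⟩) (fun v => by simp [hb]) g⁻¹ v
  · rintro _ ⟨v, rfl⟩
    refine ⟨Finsupp.single (Multiplicative.ofAdd (1, 0))⁻¹ v, ?_⟩
    rw [homologyD1_single, inv_inv]
    rfl

/-- A fixed vector of `zC` satisfies `v (k + 1) = z * v k`, so it is a multiple of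
`(1, z, …, zⁿ⁻¹)`, which is fixed because `zⁿ = 1`. -/
lemma finrank_ker_zC (n : ℕ) [NeZero n] (z : ℂ) (hz : z ^ n = 1) :
    Module.finrank ℂ (LinearMap.ker (Matrix.mulVecLin (z • Cmat n) - LinearMap.id)) = 1 := by
  have hC : ∀ (v : Fin n → ℂ) (k : Fin n), (Matrix.mulVecLin (z • Cmat n)) v (k + 1) = z * v k := by
    intro v k
    simp [Matrix.mulVec, dotProduct, Cmat]
  have hmem : ∀ v : Fin n → ℂ, v ∈ LinearMap.ker (Matrix.mulVecLin (z • Cmat n) - LinearMap.id) ↔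
      ∀ k, v (k + 1) = z * v k := by
    intro v
    rw [LinearMap.mem_ker, LinearMap.sub_apply, LinearMap.id_apply, sub_eq_zero]
    constructor
    · intro h k
      rw [← hC, h]
    · intro h
      funext i
      have := (hC v (i - 1)).trans (h (i - 1)).symm
      rwa [sub_add_cancel] at this
  have hw : (fun i : Fin n => z ^ i.val) ∈
      LinearMap.ker (Matrix.mulVecLin (z • Cmat n) - LinearMap.id) := by
    rw [hmem]
    intro k
    rw [← pow_succ', Fin.val_add, pow_eq_pow_mod (k.val + 1) hz, Fin.val_one', Nat.add_mod_mod]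
  refine finrank_eq_one_iff'.2 ⟨⟨_, hw⟩, fun h => ?_, fun v => ⟨v.1 0, Subtype.ext ?_⟩⟩
  · have := congrFun (congrArg Subtype.val h) 0
    simp at this
  · have hv := (hmem _).1 v.2
    funext i
    change v.1 0 * z ^ i.val = v.1 i
    obtain ⟨i, hi⟩ := i
    induction i with
    | zero =>
      change v.1 0 * z ^ 0 = v.1 ⟨0, hi⟩
      rw [pow_zero, mul_one]
      rfl
    | succ i ih =>
      have h1 : (⟨i + 1, hi⟩ : Fin n) = ⟨i, by omega⟩ + 1 := by
        apply Fin.ext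
        rw [Fin.val_add, Fin.val_one', Nat.add_mod_mod, Nat.mod_eq_of_lt hi]
      rw [h1, hv, ← ih (by omega), ← h1, pow_succ]
      ring

/-- Let `zⁿ = 1` and let `ρ : ℤ × ℤ → GL(n,ℂ)` be the representation with
`ρ(1,0) = zC` and `ρ(0,1) = I`.  Then `dim H⁰ = 1`, `dim H¹ = 2`, `dim H² = 1` for group
cohomology of `ℤ × ℤ` with coefficients in `ℂⁿ`, and likewise `dim H₀ = 1`, `dim H₁ = 2`,
`dim H₂ = 1` for group homology. -/
theorem cohomology_of_boundary_torus (n : ℕ) [NeZero n] (z : ℂ) (hz : z ^ n = 1)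
    (ρ : Representation ℂ (Multiplicative (ℤ × ℤ)) (Fin n → ℂ))
    (hρ1 : ρ (Multiplicative.ofAdd (1, 0)) = Matrix.mulVecLin (z • Cmat n))
    (hρ2 : ρ (Multiplicative.ofAdd (0, 1)) = LinearMap.id) :
    Module.finrank ℂ (groupCohomology (Rep.of ρ) 0) = 1 ∧
    Module.finrank ℂ (groupCohomology (Rep.of ρ) 1) = 2 ∧
    Module.finrank ℂ (groupCohomology (Rep.of ρ) 2) = 1 ∧
    Module.finrank ℂ (groupHomology0 ρ) = 1 ∧
    Module.finrank ℂ (groupHomology1 ρ) = 2 ∧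
    Module.finrank ℂ (groupHomology2 ρ) = 1 := by
  have hker : Module.finrank ℂ
      (LinearMap.ker (ρ (Multiplicative.ofAdd (1, 0)) - LinearMap.id)) = 1 := by
    rw [hρ1]
    exact finrank_ker_zC n z hz
  have hcoker := (finrank_coker_eq_ker (ρ (Multiplicative.ofAdd (1, 0)) - LinearMap.id)).trans hker
  have hb : ρ.dual (Multiplicative.ofAdd (0, 1)) = LinearMap.id := by
    have h : ρ (Multiplicative.ofAdd (0, 1))⁻¹ = LinearMap.id := by
      refine LinearMap.ext fun v => ?_
      simpa [hρ2] using ρ.self_inv_apply (Multiplicative.ofAdd ((0, 1) : ℤ × ℤ)) v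
    rw [Representation.dual_apply, h]
    rfl
  have hker' : Module.finrank ℂ
      (LinearMap.ker (ρ.dual (Multiplicative.ofAdd (1, 0)) - LinearMap.id)) = 1 := by
    rw [ker_dual_sub_id, ← (Submodule.dualQuotEquivDualAnnihilator _).finrank_eq,
      Subspace.dual_finrank_eq, hcoker]
  have hcoker' :=
    (finrank_coker_eq_ker (ρ.dual (Multiplicative.ofAdd (1, 0)) - LinearMap.id)).trans hker'
  refine ⟨?_, ?_, ?_, ?_, ?_, ?_⟩
  · rw [finrank_H0 ρ hρ2, hker]
  · rw [finrank_H1 ρ hρ2, hker, hcoker]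
  · rw [finrank_H2 ρ hρ2, hcoker]
  · change Module.finrank ℂ ((Fin n → ℂ) ⧸ LinearMap.range (homologyD1 ρ)) = 1
    rw [range_homologyD1 ρ hρ2, hcoker]
  · rw [finrank_groupHomology1, finrank_H1 ρ.dual hb, hker', hcoker']
  · rw [finrank_groupHomology2, finrank_H2 ρ.dual hb, hcoker']
end
end

section
/- Let n ≥ 1, ω = e^{2πi/n}, and M ∈ SL(n,ℂ). If the matrices M and ωM have the same characteristic polynomial, then the monic characteristic polynomial of M is Xⁿ + (−1)ⁿ (equivalently det(M − tI) = (−1)ⁿtⁿ + 1); in particular M has n distinct eigenvalues, namely the n-th roots of (−1)^{n+1}, and for every z ∈ ℂ with zⁿ = (−1)^{n+1} there exists P ∈ GL(n,ℂ) with P·M·P⁻¹ = zC. -/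
/-!
Write `p` for the monic characteristic polynomial of `M` and `ω = e^{2πi/n}`. For every matrix
`p_{ωM}(ωt) = ωⁿ p_M(t)`, so the hypothesis says `p(ωt) = p(t)`. Comparing coefficients,
`aᵢ ωⁱ = aᵢ`, and since `ω` is a primitive `n`-th root of unity only `a₀` and `aₙ = 1` survive;
`a₀ = (-1)ⁿ` because `det M = 1`. This is `charpoly_eq_of_twist`.

The polynomial `Xⁿ + (-1)ⁿ` is separable, so `M` has `n` distinct eigenvalues. Each of them is also
an eigenvalue of `zC` when `zⁿ = (-1)^{n+1}`, an eigenvector for `l` being `((z / l)ⁱ)ᵢ`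
(`smul_Cmat_mulVec`). Both matrices are therefore conjugate to the same diagonal matrix
(`exists_conj_diagonal`), hence to each other.
-/


open Matrix Polynomial

noncomputable section

theorem eval_charpoly_smul {n : ℕ} (M : Matrix (Fin n) (Fin n) ℂ) (c t : ℂ) :
    (c • M).charpoly.eval (c * t) = c ^ n * M.charpoly.eval t := by
  rw [Matrix.eval_charpoly, Matrix.eval_charpoly]
  have : Matrix.scalar (Fin n) (c * t) - c • M = c • (Matrix.scalar (Fin n) t - M) := by
    ext i j
    by_cases h : i = j <;> simp [h, Matrix.scalar_apply, mul_sub]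
  rw [this, Matrix.det_smul, Fintype.card_fin]

theorem charpoly_eq_of_twist {n : ℕ} (hn : n ≠ 0) {w : ℂ} (hw : IsPrimitiveRoot w n)
    (M : Matrix (Fin n) (Fin n) ℂ) (hM : M.det = 1)
    (hcp : (w • M).charpoly = M.charpoly) :
    M.charpoly = X ^ n + C ((-1 : ℂ) ^ n) := by
  have hcomp : M.charpoly.comp (C w * X) = M.charpoly := by
    refine Polynomial.funext fun t => ?_
    have h := eval_charpoly_smul M w t
    rw [hcp, hw.pow_eq_one, one_mul] at h
    simpa [Polynomial.eval_comp] using h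
  have hdeg : M.charpoly.natDegree = n := by
    simp
  have h0 : M.charpoly.coeff 0 = (-1) ^ n := by
    have h := M.det_eq_sign_charpoly_coeff
    rw [hM, Fintype.card_fin] at h
    calc M.charpoly.coeff 0 = ((-1) ^ n * (-1) ^ n) * M.charpoly.coeff 0 := by
          rw [← mul_pow]; simp
      _ = (-1) ^ n := by rw [mul_assoc, ← h, mul_one]
  ext i
  rw [coeff_add, coeff_X_pow, coeff_C]
  rcases Nat.eq_zero_or_pos i with rfl | hi
  · simp [h0, hn.symm]
  rcases lt_trichotomy i n with hlt | rfl | hgt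
  · have h : M.charpoly.coeff i * w ^ i = M.charpoly.coeff i := by
      rw [← comp_C_mul_X_coeff, hcomp]
    have hne : w ^ i ≠ 1 := hw.pow_ne_one_of_pos_of_lt hi.ne' hlt
    have hz : M.charpoly.coeff i = 0 := by
      by_contra hc
      exact hne (mul_left_cancel₀ hc (by rw [h, mul_one]))
    simp [hz, hlt.ne, hi.ne']
  · have h := M.charpoly_monic.coeff_natDegree
    rw [hdeg] at h
    simp [h, hn]
  · rw [coeff_eq_zero_of_natDegree_lt (by omega)]
    simp [ne_of_gt hgt, ne_of_gt hi]

/-- A matrix with `n` distinct eigenvalues is conjugate to the diagonal matrix of these, the columns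
of the conjugating matrix being eigenvectors. -/
theorem exists_conj_diagonal {n : ℕ} (A : Matrix (Fin n) (Fin n) ℂ) (d : Fin n → ℂ)
    (hd : Function.Injective d) (hA : ∀ i, ∃ v : Fin n → ℂ, v ≠ 0 ∧ A *ᵥ v = d i • v) :
    ∃ Q : GL (Fin n) ℂ, A * (Q : Matrix (Fin n) (Fin n) ℂ) =
      (Q : Matrix (Fin n) (Fin n) ℂ) * Matrix.diagonal d := by
  choose v hv0 hv using hA
  have hli : LinearIndependent ℂ v :=
    Module.End.eigenvectors_linearIndependent' (Matrix.toLin' A) d hd v fun i =>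
      ⟨Module.End.mem_eigenspace_iff.mpr (by simpa using hv i), hv0 i⟩
  have hU : IsUnit (Matrix.of fun i j => v j i) :=
    Matrix.linearIndependent_cols_iff_isUnit.mp hli
  obtain ⟨Q, hQ⟩ := hU
  refine ⟨Q, ?_⟩
  rw [hQ]
  ext i j
  rw [Matrix.mul_diagonal]
  have h := congrFun (hv j) i
  simpa [Matrix.mulVec, dotProduct, Matrix.mul_apply, mul_comm] using h

/-- The vector `((z / l)ⁱ)ᵢ` is an eigenvector of `z • Cmat n` for the eigenvalue `l`: the condition
`lⁿ = zⁿ` makes it consistent across the cyclic wrap-around. -/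
theorem smul_Cmat_mulVec (n : ℕ) [NeZero n] {z l : ℂ} (hl : l ≠ 0) (h : l ^ n = z ^ n) :
    (z • Cmat n) *ᵥ (fun i : Fin n => (z / l) ^ (i : ℕ)) =
      l • fun i : Fin n => (z / l) ^ (i : ℕ) := by
  have hr : (z / l) ^ n = 1 := by
    rw [div_pow, ← h, div_self (pow_ne_zero n hl)]
  have hsucc (k : Fin n) : (z / l) ^ ((k + 1 : Fin n) : ℕ) = (z / l) ^ (k : ℕ) * (z / l) := by
    rw [Fin.val_add, ← pow_eq_pow_mod _ hr, pow_add, Fin.val_one', ← pow_eq_pow_mod _ hr, pow_one]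
  ext i
  obtain ⟨k, rfl⟩ : ∃ k : Fin n, i = k + 1 := ⟨i - 1, by simp⟩
  have hsum : (Cmat n *ᵥ (fun i : Fin n => (z / l) ^ (i : ℕ))) (k + 1) = (z / l) ^ (k : ℕ) := by
    simp [Matrix.mulVec, dotProduct, Cmat]
  rw [Matrix.smul_mulVec, Pi.smul_apply, Pi.smul_apply, hsum, hsucc, smul_eq_mul, smul_eq_mul]
  field_simp

/-- If `M ∈ SL(n,ℂ)` and `M` and `ωM` (where `ω = e^{2πi/n}`) have the
same characteristic polynomial, then the characteristic polynomial of `M` is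
`Xⁿ + (-1)ⁿ`; in particular `M` has `n` distinct eigenvalues, namely the `n`-th roots of
`(-1)^{n+1}`, and for every `z` with `zⁿ = (-1)^{n+1}` the matrix `M` is conjugate
to `zC`. -/
theorem charpoly_of_twist_invariant (n : ℕ) [NeZero n]
    (M : Matrix (Fin n) (Fin n) ℂ) (hM : M.det = 1)
    (hcp : (Complex.exp (2 * Real.pi * Complex.I / n) • M).charpoly = M.charpoly) :
    M.charpoly = X ^ n + C ((-1 : ℂ) ^ n) ∧
    (∀ z : ℂ, M.charpoly.IsRoot z ↔ z ^ n = (-1) ^ (n + 1)) ∧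
    M.charpoly.roots.toFinset.card = n ∧
    (∀ z : ℂ, z ^ n = (-1) ^ (n + 1) →
      ∃ P : GL (Fin n) ℂ,
        (P : Matrix (Fin n) (Fin n) ℂ) * M * ((P⁻¹ : GL (Fin n) ℂ) : Matrix (Fin n) (Fin n) ℂ) =
          z • Cmat n) := by
  have hn : n ≠ 0 := NeZero.ne n
  have hp := charpoly_eq_of_twist hn (Complex.isPrimitiveRoot_exp n hn) M hM hcp
  have hroot (z : ℂ) : M.charpoly.IsRoot z ↔ z ^ n = (-1) ^ (n + 1) := by
    rw [hp, IsRoot.def, eval_add, eval_pow, eval_X, eval_C, add_eq_zero_iff_eq_neg, pow_succ,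
      mul_neg_one]
  have hcard : M.charpoly.roots.toFinset.card = n := by
    have hsep : M.charpoly.Separable := by
      have h := separable_X_pow_sub_C (F := ℂ) (n := n) (-(-1) ^ n) (by exact_mod_cast hn) (by simp)
      rwa [C_neg, sub_neg_eq_add, ← hp] at h
    rw [Multiset.toFinset_card_of_nodup (nodup_roots hsep),
      ← (IsAlgClosed.splits M.charpoly).natDegree_eq_card_roots, M.charpoly_natDegree_eq_dim,
      Fintype.card_fin]
  refine ⟨hp, hroot, hcard, fun z hz => ?_⟩
  let e : Fin n ≃ M.charpoly.roots.toFinset := (Finset.equivFinOfCardEq hcard).symm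
  let d : Fin n → ℂ := fun i => e i
  have hd : Function.Injective d := Subtype.val_injective.comp e.injective
  have hdroot (i : Fin n) : M.charpoly.IsRoot (d i) :=
    isRoot_of_mem_roots (Multiset.mem_toFinset.mp (e i).2)
  obtain ⟨Q, hQ⟩ := exists_conj_diagonal M d hd fun i => by
    have h := hdroot i
    rw [IsRoot.def, Matrix.eval_charpoly] at h
    obtain ⟨v, hv0, hv⟩ := Matrix.exists_mulVec_eq_zero_iff.mpr h
    refine ⟨v, hv0, ?_⟩
    rw [Matrix.sub_mulVec, sub_eq_zero] at hv
    rw [← hv]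
    ext j
    simp [Matrix.scalar_apply, Matrix.mulVec_diagonal]
  obtain ⟨R, hR⟩ := exists_conj_diagonal (z • Cmat n) d hd fun i => by
    have hdn := (hroot _).mp (hdroot i)
    have hl : d i ≠ 0 := by
      intro h0
      rw [h0, zero_pow hn] at hdn
      exact pow_ne_zero (n + 1) (by norm_num : (-1 : ℂ) ≠ 0) hdn.symm
    refine ⟨_, fun h0 => ?_, smul_Cmat_mulVec n hl (hdn.trans hz.symm)⟩
    simpa using congrFun h0 0
  -- `M = Q D Q⁻¹` and `zC = R D R⁻¹` with the same diagonal `D`, so `R Q⁻¹` conjugates `M` to `zC`.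
  refine ⟨R * Q⁻¹, ?_⟩
  rw [_root_.mul_inv_rev, inv_inv, Units.val_mul, Units.val_mul]
  calc (R : Matrix (Fin n) (Fin n) ℂ) * ((Q⁻¹ : GL (Fin n) ℂ) : Matrix (Fin n) (Fin n) ℂ) * M *
        ((Q : Matrix (Fin n) (Fin n) ℂ) * ((R⁻¹ : GL (Fin n) ℂ) : Matrix (Fin n) (Fin n) ℂ))
      = R * ((Q⁻¹ : GL (Fin n) ℂ) : Matrix (Fin n) (Fin n) ℂ) * (M * Q) *
          ((R⁻¹ : GL (Fin n) ℂ) : Matrix (Fin n) (Fin n) ℂ) := by simp only [mul_assoc]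
    _ = R * (((Q⁻¹ : GL (Fin n) ℂ) : Matrix (Fin n) (Fin n) ℂ) * Q) * Matrix.diagonal d *
          ((R⁻¹ : GL (Fin n) ℂ) : Matrix (Fin n) (Fin n) ℂ) := by rw [hQ]; simp only [mul_assoc]
    _ = (z • Cmat n) * R * ((R⁻¹ : GL (Fin n) ℂ) : Matrix (Fin n) (Fin n) ℂ) := by
        rw [Units.inv_mul, mul_one, hR]
    _ = z • Cmat n := by rw [mul_assoc, Units.mul_inv, mul_one]
end
end

section
/- Let n ≥ 1, ω = e^{2πi/n}, z ∈ ℂ with z ≠ 0, and let D = diag(z, ωz, ω²z, …, ω^{n−1}z). Suppose A ∈ SL(n,ℂ) satisfies A·D = ω·D·A. Then the entries of A satisfy A_{ij} = 0 unless j ≡ i+1 (mod n), and det(A − tI) = (−1)ⁿ(tⁿ − (−1)^{n+1}); in particular A has n distinct eigenvalues, namely the n-th roots of (−1)^{n+1}. -/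
/-!
Write `p` for the characteristic polynomial of `A`. Comparing entries in `A * D = ω • (D * A)`
gives `A i j * ω ^ j = ω ^ (i + 1) * A i j`, so a non-zero entry forces `j ≡ i + 1 (mod n)`
because `ω` is a primitive `n`-th root of unity.

The shape of `A` is not needed for `p`. The relation gives
`(ωt - A) * D = ω • (D * (t - A))`, and taking determinants, with `det D ≠ 0` and `ω ^ n = 1`,
yields `p(ωt) = p(t)`. Hence only the coefficients of `p` in degrees divisible by `n` survive:
the leading one, and the constant one, which is `(-1) ^ n * det A = (-1) ^ n`. The polynomial
`X ^ n - (-1) ^ (n + 1)` so obtained is separable, which gives `n` distinct roots.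
-/

open Matrix Polynomial

noncomputable section

/-- Twisting by an invertible `D` makes the characteristic polynomial invariant under `t ↦ ωt`. -/
theorem charpoly_eval_twist {n : ℕ} {ω : ℂ} (hω : ω ^ n = 1) {A D : Matrix (Fin n) (Fin n) ℂ}
    (hD : D.det ≠ 0) (h : A * D = ω • (D * A)) (t : ℂ) :
    A.charpoly.eval (ω * t) = A.charpoly.eval t := by
  have key : (Matrix.scalar (Fin n) (ω * t) - A) * D
      = ω • (D * (Matrix.scalar (Fin n) t - A)) := by
    rw [sub_mul, mul_sub, h, smul_sub]
    congr 1
    ext i j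
    simp [Matrix.scalar_apply, Matrix.diagonal_mul, Matrix.mul_diagonal]
    ring
  have hdet := congrArg Matrix.det key
  rw [Matrix.det_mul, Matrix.det_smul, Matrix.det_mul, Fintype.card_fin, hω, one_mul,
    mul_comm D.det] at hdet
  rw [Matrix.eval_charpoly, Matrix.eval_charpoly]
  exact mul_right_cancel₀ hD hdet

/-- A polynomial function invariant under `t ↦ ωt`, with `ω` a primitive `n`-th root of unity,
has coefficients only in degrees divisible by `n`. -/
theorem coeff_eq_zero_of_twist {n : ℕ} {ω : ℂ} (hω : IsPrimitiveRoot ω n) {p : ℂ[X]}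
    (h : ∀ t, p.eval (ω * t) = p.eval t) {k : ℕ} (hk : ¬ n ∣ k) : p.coeff k = 0 := by
  have hp : p.comp (C ω * X) = p := Polynomial.funext fun t => by simp [h]
  have hc := congrArg (fun q => q.coeff k) hp
  simp only [Polynomial.comp_C_mul_X_coeff] at hc
  by_contra h0
  exact hk ((hω.pow_eq_one_iff_dvd k).1 (mul_left_cancel₀ h0 (by rw [hc, mul_one])))

theorem charpoly_of_twist {n : ℕ} (hn : n ≠ 0) {ω : ℂ} (hω : IsPrimitiveRoot ω n)
    {A D : Matrix (Fin n) (Fin n) ℂ} (hA : A.det = 1) (hD : D.det ≠ 0)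
    (h : A * D = ω • (D * A)) :
    A.charpoly = X ^ n - C ((-1 : ℂ) ^ (n + 1)) := by
  have hdeg : A.charpoly.natDegree = n := by simp [Matrix.charpoly_natDegree_eq_dim]
  ext k
  rw [coeff_sub, coeff_X_pow, coeff_C]
  rcases Nat.eq_zero_or_pos k with rfl | hk
  · have hd := Matrix.det_eq_sign_charpoly_coeff A
    rw [hA, Fintype.card_fin] at hd
    have hs : ((-1 : ℂ) ^ n) * (-1) ^ n = 1 := by rw [← mul_pow]; simp
    rw [if_neg (Ne.symm hn), if_pos rfl, pow_succ]
    linear_combination (-(-1 : ℂ) ^ n) * hd - A.charpoly.coeff 0 * hs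
  · rw [if_neg hk.ne', sub_zero]
    split_ifs with hkn
    · have hm := (Matrix.charpoly_monic A).coeff_natDegree
      rw [hdeg] at hm
      exact (congrArg A.charpoly.coeff hkn).trans hm
    · by_cases hdvd : n ∣ k
      · apply coeff_eq_zero_of_natDegree_lt
        rw [hdeg]
        exact lt_of_le_of_ne (Nat.le_of_dvd hk hdvd) (Ne.symm hkn)
      · exact coeff_eq_zero_of_twist hω (charpoly_eval_twist hω.pow_eq_one hD h) hdvd

/-- Let `ω = e^{2πi/n}`, `z ≠ 0` and `D = diag(z, ωz, …, ω^{n-1}z)`.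
If `A ∈ SL(n,ℂ)` satisfies `A·D = ω·(D·A)`, then `A i j = 0` unless `j ≡ i + 1 (mod n)`,
and `det (A - t·I) = (-1)ⁿ(tⁿ - (-1)^{n+1})`, i.e. the characteristic polynomial of `A`
is `Xⁿ - (-1)^{n+1}`; in particular `A` has `n` distinct eigenvalues, namely the `n`-th
roots of `(-1)^{n+1}`. -/
theorem entries_and_charpoly_of_twist_conjugator (n : ℕ) [NeZero n]
    (z : ℂ) (hz : z ≠ 0) (A : Matrix (Fin n) (Fin n) ℂ) (hA : A.det = 1)
    (hAD : A * Matrix.diagonal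
        (fun i : Fin n => Complex.exp (2 * Real.pi * Complex.I / n) ^ (i : ℕ) * z) =
      Complex.exp (2 * Real.pi * Complex.I / n) •
        (Matrix.diagonal
          (fun i : Fin n => Complex.exp (2 * Real.pi * Complex.I / n) ^ (i : ℕ) * z) * A)) :
    (∀ i j : Fin n, j ≠ i + 1 → A i j = 0) ∧
    A.charpoly = X ^ n - C ((-1 : ℂ) ^ (n + 1)) ∧
    (∀ w : ℂ, A.charpoly.IsRoot w ↔ w ^ n = (-1) ^ (n + 1)) ∧
    A.charpoly.roots.toFinset.card = n := by
  have hn : n ≠ 0 := NeZero.ne n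
  have hω := Complex.isPrimitiveRoot_exp n hn
  set ω := Complex.exp (2 * Real.pi * Complex.I / n)
  have hω0 : ω ≠ 0 := hω.ne_zero hn
  have hD : (Matrix.diagonal (fun i : Fin n => ω ^ (i : ℕ) * z)).det ≠ 0 := by
    rw [Matrix.det_diagonal]
    exact Finset.prod_ne_zero_iff.2 fun i _ => mul_ne_zero (pow_ne_zero _ hω0) hz
  have hp := charpoly_of_twist hn hω hA hD hAD
  have ha : ((-1 : ℂ) ^ (n + 1)) ≠ 0 := pow_ne_zero _ (by norm_num)
  refine ⟨fun i j hij => ?_, hp, fun w => ?_, ?_⟩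
  · by_contra h0
    apply hij
    have e := congrFun (congrFun hAD i) j
    rw [Matrix.mul_diagonal, Matrix.smul_apply, Matrix.diagonal_mul, smul_eq_mul] at e
    have e' : ω ^ (j : ℕ) = ω ^ ((i : ℕ) + 1) :=
      mul_right_cancel₀ (mul_ne_zero h0 hz) (by rw [pow_succ]; linear_combination e)
    rw [← pow_mod_orderOf ω ((i : ℕ) + 1), ← hω.eq_orderOf] at e'
    apply Fin.ext
    rw [Fin.val_add, Fin.val_one', Nat.add_mod_mod]
    exact hω.pow_inj j.isLt (Nat.mod_lt _ (Nat.pos_of_ne_zero hn)) e'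
  · rw [hp, IsRoot.def]
    simp only [eval_sub, eval_pow, eval_X, eval_C, sub_eq_zero]
  · have hsep : (X ^ n - C ((-1 : ℂ) ^ (n + 1))).Separable :=
      separable_X_pow_sub_C _ (Nat.cast_ne_zero.2 hn) ha
    rw [hp, Multiset.toFinset_card_of_nodup (nodup_roots hsep),
      ← (IsAlgClosed.splits _).natDegree_eq_card_roots, natDegree_X_pow_sub_C]
end
end

section
/- Let π be a group, ε : π → ℤ a homomorphism, and suppose there exists μ ∈ π with ε(μ) = 1. Let n ≥ 1 and ω = e^{2πi/n}. Suppose α : π → SL(n,ℂ) is a homomorphism and A ∈ GL(n,ℂ) satisfies A·α(g)·A⁻¹ = ω^{ε(g)}·α(g) for all g ∈ π. Then the image α([π,π]) of the commutator subgroup is an abelian subgroup of SL(n,ℂ); in particular α is metabelian, i.e., α(g) = I for every g in the second derived subgroup π⁽²⁾ = [[π,π],[π,π]]. -/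
/-!
Write `M = α(μ)`. The hypothesis at `μ` reads `A M = ω M A`, so if `v` is an eigenvector of `A`
with eigenvalue `c` (which is nonzero as `A` is invertible), then `v, M v, …, M ^ (n - 1) v` are
eigenvectors of `A` with eigenvalues `c, ω c, …, ω ^ (n - 1) c`. These are distinct because `ω` is
a primitive `n`-th root of unity, so the vectors form an eigenbasis and `A` has simple spectrum
(`commute_of_twist`). Hence any two endomorphisms commuting with `A` are diagonal in this basis and
commute with each other (`commute_of_simple_eigenbasis`). Since `ε` kills the commutator subgroup,
`α([π,π])` lies in the centralizer of `A`, which is therefore abelian.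
-/

open Matrix

noncomputable section

/-- If `f` is diagonal in a basis with pairwise distinct eigenvalues, then every endomorphism
commuting with `f` is diagonal in that basis too. -/
lemma exists_smul_of_commute_eigenbasis {K V ι : Type*} [Field K] [AddCommGroup V] [Module K V]
    (b : Module.Basis ι K V) (e : ι → K) (he : Function.Injective e) (f g : Module.End K V)
    (hf : ∀ i, f (b i) = e i • b i) (hg : Commute f g) (i : ι) : ∃ c : K, g (b i) = c • b i := by
  have hcoord : ∀ j, b.coord j ∘ₗ f = e j • b.coord j := by
    intro j
    refine b.ext fun k => ?_
    by_cases hjk : k = j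
    · subst hjk; simp [hf]
    · simp [hf, hjk]
  refine ⟨b.repr (g (b i)) i, b.repr.injective ?_⟩
  ext j
  by_cases hij : i = j
  · subst hij; simp
  · -- comparing `j`-th coordinates of `f (g (b i)) = e i • g (b i)` forces the coordinate to vanish
    have h1 : f (g (b i)) = e i • g (b i) := by
      have := LinearMap.congr_fun hg.eq (b i)
      simpa [hf] using this
    have h2 := LinearMap.congr_fun (hcoord j) (g (b i))
    simp only [LinearMap.comp_apply, h1, map_smul, LinearMap.smul_apply, smul_eq_mul,
      Module.Basis.coord_apply] at h2
    have h3 : b.repr (g (b i)) j = 0 := by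
      by_contra h0
      exact hij (he (mul_right_cancel₀ h0 h2))
    simp [h3, hij]

/-- The centralizer of an endomorphism with simple spectrum is commutative. -/
lemma commute_of_simple_eigenbasis {K V ι : Type*} [Field K] [AddCommGroup V] [Module K V]
    (b : Module.Basis ι K V) (e : ι → K) (he : Function.Injective e) (f g h : Module.End K V)
    (hf : ∀ i, f (b i) = e i • b i) (hg : Commute f g) (hh : Commute f h) : Commute g h := by
  refine b.ext fun i => ?_
  obtain ⟨c, hc⟩ := exists_smul_of_commute_eigenbasis b e he f g hf hg i
  obtain ⟨d, hd⟩ := exists_smul_of_commute_eigenbasis b e he f h hf hh i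
  simp [hc, hd, smul_smul, mul_comm]

/-- An invertible `f` that is multiplied by a primitive `n`-th root of unity under conjugation by
some invertible `m`, in dimension `n`, has simple spectrum, so its centralizer is commutative. -/
lemma commute_of_twist {V : Type*} [AddCommGroup V] [Module ℂ V]
    {n : ℕ} [NeZero n] (hV : Module.finrank ℂ V = n) {w : ℂ} (hw : IsPrimitiveRoot w n)
    (f m g h : Module.End ℂ V) (hf : Function.Injective f) (hm : Function.Injective m)
    (hfm : f * m = w • (m * f)) (hg : Commute f g) (hh : Commute f h) : Commute g h := by
  have hpos : 0 < Module.finrank ℂ V := hV ▸ Nat.pos_of_neZero n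
  have : FiniteDimensional ℂ V := Module.finite_of_finrank_pos hpos
  have : Nontrivial V := Module.nontrivial_of_finrank_pos hpos
  obtain ⟨c, hc⟩ := Module.End.exists_eigenvalue f
  obtain ⟨v, hv⟩ := hc.exists_hasEigenvector
  have hfv : f v = c • v := hv.apply_eq_smul
  have hv0 : v ≠ 0 := hv.2
  have hc0 : c ≠ 0 := by
    rintro rfl
    exact hv0 (hf (by simpa using hfv))
  have hstep : ∀ k : ℕ, f ((m ^ k) v) = (w ^ k * c) • (m ^ k) v := by
    intro k
    induction k with
    | zero => simpa using hfv
    | succ k ih =>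
      have := LinearMap.congr_fun hfm ((m ^ k) v)
      simp only [Module.End.mul_apply, LinearMap.smul_apply] at this
      rw [pow_succ' m, Module.End.mul_apply, this, ih, map_smul, smul_smul, pow_succ', mul_assoc]
  have hne : ∀ k : ℕ, (m ^ k) v ≠ 0 := by
    intro k
    induction k with
    | zero => simpa using hv0
    | succ k ih =>
      rw [pow_succ', Module.End.mul_apply]
      exact fun h0 => ih (hm (by simpa using h0))
  have hinj : Function.Injective fun k : Fin n => w ^ (k : ℕ) * c := fun i j hij =>
    Fin.ext (hw.pow_inj i.2 j.2 (mul_right_cancel₀ hc0 hij))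
  have hli : LinearIndependent ℂ fun k : Fin n => (m ^ (k : ℕ)) v :=
    Module.End.eigenvectors_linearIndependent' f _ hinj _ fun k =>
      ⟨Module.End.mem_eigenspace_iff.2 (hstep k), hne k⟩
  have : Nonempty (Fin n) := ⟨0⟩
  let b := basisOfLinearIndependentOfCardEqFinrank hli (by simp [hV])
  exact commute_of_simple_eigenbasis b _ hinj f g h (fun i => by simpa [b] using hstep i) hg hh

/-- Let `ε : π → ℤ` be a homomorphism with `ε(μ) = 1` for some `μ`,
`ω = e^{2πi/n}`, and `α : π → SL(n,ℂ)` a homomorphism.  If some `A ∈ GL(n,ℂ)` satisfies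
`A α(g) A⁻¹ = ω^{ε(g)} α(g)` for all `g`, then the image of the commutator subgroup
`[π,π]` under `α` is abelian; in particular `α` is metabelian, i.e. trivial on the second
derived subgroup `π⁽²⁾`. -/
theorem twist_conjugate_implies_metabelian {π : Type*} [Group π]
    (ε : π →* Multiplicative ℤ) (μ : π) (hμ : ε μ = Multiplicative.ofAdd 1)
    (n : ℕ) [NeZero n] (α : π →* Matrix.SpecialLinearGroup (Fin n) ℂ)
    (A : GL (Fin n) ℂ)
    (hA : ∀ g : π,
      (A : Matrix (Fin n) (Fin n) ℂ) * (α g : Matrix (Fin n) (Fin n) ℂ) *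
          ((A⁻¹ : GL (Fin n) ℂ) : Matrix (Fin n) (Fin n) ℂ) =
        Complex.exp (2 * Real.pi * Complex.I / n) ^ Multiplicative.toAdd (ε g) •
          (α g : Matrix (Fin n) (Fin n) ℂ)) :
    (∀ g₁ ∈ commutator π, ∀ g₂ ∈ commutator π, α g₁ * α g₂ = α g₂ * α g₁) ∧
    (∀ g ∈ derivedSeries π 2, α g = 1) := by
  have hconj : ∀ g : π, (A : Matrix (Fin n) (Fin n) ℂ) * (α g : Matrix (Fin n) (Fin n) ℂ) =
      Complex.exp (2 * Real.pi * Complex.I / n) ^ Multiplicative.toAdd (ε g) •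
        ((α g : Matrix (Fin n) (Fin n) ℂ) * (A : Matrix (Fin n) (Fin n) ℂ)) := by
    intro g
    rw [← Matrix.smul_mul, ← hA g, mul_assoc, Units.inv_mul, mul_one]
  have hcomm : ∀ g ∈ commutator π, Commute (A : Matrix (Fin n) (Fin n) ℂ)
      (α g : Matrix (Fin n) (Fin n) ℂ) := by
    intro g hg
    have hε : ε g = 1 := Abelianization.commutator_subset_ker ε hg
    simpa [hε, commute_iff_eq] using hconj g
  have habel : ∀ g₁ ∈ commutator π, ∀ g₂ ∈ commutator π, α g₁ * α g₂ = α g₂ * α g₁ := by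
    intro g₁ h₁ g₂ h₂
    have hw := Complex.isPrimitiveRoot_exp n (NeZero.ne n)
    let T := Matrix.toLinAlgEquiv' (R := ℂ) (n := Fin n)
    have hinj : ∀ B : Matrix (Fin n) (Fin n) ℂ, IsUnit B → Function.Injective (T B) := fun B hB =>
      ((Module.End.isUnit_iff _).1 (hB.map T)).1
    have hM : IsUnit (α μ : Matrix (Fin n) (Fin n) ℂ) := by
      rw [Matrix.isUnit_iff_isUnit_det]; simp
    have hT : Commute (T (α g₁ : Matrix (Fin n) (Fin n) ℂ)) (T (α g₂ : Matrix _ _ ℂ)) := by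
      refine commute_of_twist (n := n) (by simp) hw (T A) (T (α μ : Matrix _ _ ℂ)) _ _
        (hinj _ A.isUnit) (hinj _ hM) ?_ ((hcomm g₁ h₁).map T) ((hcomm g₂ h₂).map T)
      have := hconj μ
      rw [hμ, toAdd_ofAdd, zpow_one] at this
      rw [← map_mul, this, map_smul, map_mul]
    apply Subtype.ext
    apply T.injective
    simpa using hT.eq
  refine ⟨habel, fun g hg => ?_⟩
  have hle : derivedSeries π 2 ≤ α.ker := by
    rw [derivedSeries_succ, derivedSeries_one, Subgroup.commutator_le]
    intro a ha b hb
    rw [MonoidHom.mem_ker, map_commutatorElement, commutatorElement_eq_one_iff_mul_comm]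
    exact habel a ha b hb
  exact hle hg
end
end

section
/- Let π be a group and ε : π → ℤ a surjective homomorphism whose kernel is the commutator subgroup [π,π]. Let n ≥ 1, ω = e^{2πi/n}, and let α : π → SL(n,ℂ) be an irreducible representation (the only subspaces of ℂⁿ invariant under α(π) are 0 and ℂⁿ). Then there exists A ∈ GL(n,ℂ) with A·α(g)·A⁻¹ = ω^{ε(g)}·α(g) for all g ∈ π if and only if α is metabelian, i.e., α(g) = I for every g in the second derived subgroup π⁽²⁾ = [[π,π],[π,π]]. -/
/-!
Write `N = ker ε = [π,π]`, choose `t` with `ε t = 1`, and set `ω = exp (2πi/n)`.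

If `A` conjugates `α` to its twist, then `A` commutes with `α(N)` and `A α(t) = ω α(t) A`. Hence
`α(t)` carries the `μ`-eigenspace of `A` to the `ωμ`-eigenspace, `A` has `n` distinct eigenvalues,
and its centralizer, which contains `α(N)`, is commutative (`commute_of_commute_of_twist`). So `α`
kills `[N,N]`.

If `α` kills `[N,N]`, then the commuting family `α(N)` has a common eigenvector, of weight `χ` say
(`exists_common_eigenvector`), and `t` permutes the weights. Vectors of distinct weights are
independent, so there is a least `m > 0` such that `t ^ m` fixes `χ`; choose an eigenvector `v` of
`α(t ^ m)` in the weight space of `χ`. The vectors `v, α(t) v, …, α(t)^(m-1) v` are independent, and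
their span is invariant, so by irreducibility they form a basis and `m = n`. The diagonal map
`α(t)^k v ↦ ω^k α(t)^k v` is then the required `A` (`exists_twist_of_commute`).
-/

open Matrix

noncomputable section

open Module

/-! ### Common eigenvectors of commuting families -/

/-- An endomorphism stabilising a nonzero subspace has an eigenvector in it. -/
lemma exists_eigenvector_mem {V : Type*} [AddCommGroup V] [Module ℂ V] [FiniteDimensional ℂ V]
    (W : Submodule ℂ V) (hW : W ≠ ⊥) (f : End ℂ V) (hf : ∀ w ∈ W, f w ∈ W) :
    ∃ c : ℂ, ∃ v ∈ W, v ≠ 0 ∧ f v = c • v := by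
  have : Nontrivial W := Submodule.nontrivial_iff_ne_bot.mpr hW
  obtain ⟨c, hc⟩ := End.exists_eigenvalue (f.restrict hf)
  obtain ⟨v, hv⟩ := hc.exists_hasEigenvector
  refine ⟨c, v, v.2, fun h => hv.2 (Subtype.ext h), ?_⟩
  have := congrArg Subtype.val hv.apply_eq_smul
  simpa using this

/-- A commuting family of endomorphisms of a nonzero finite-dimensional complex space has a common
eigenvector: on a minimal nonzero invariant subspace every member of the family is scalar. -/
lemma exists_common_eigenvector {V : Type*} [AddCommGroup V] [Module ℂ V]
    [FiniteDimensional ℂ V] [Nontrivial V] {ι : Type*} (f : ι → End ℂ V)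
    (hf : ∀ i j, Commute (f i) (f j)) :
    ∃ χ : ι → ℂ, ∃ v : V, v ≠ 0 ∧ ∀ i, f i v = χ i • v := by
  obtain ⟨W, ⟨hW0, hWinv⟩, hmin⟩ := wellFounded_lt.has_min
    {W : Submodule ℂ V | W ≠ ⊥ ∧ ∀ i, ∀ w ∈ W, f i w ∈ W} ⟨⊤, top_ne_bot, by simp⟩
  have key : ∀ i, ∃ c : ℂ, ∀ w ∈ W, f i w = c • w := by
    intro i
    obtain ⟨c, v, hvW, hv0, hv⟩ := exists_eigenvector_mem W hW0 (f i) (hWinv i)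
    refine ⟨c, ?_⟩
    have hE : W ⊓ (f i).eigenspace c = W := by
      by_contra hne
      refine hmin (W ⊓ (f i).eigenspace c) ⟨?_, ?_⟩ (lt_of_le_of_ne inf_le_left hne)
      · intro h
        exact hv0 (by
          have : v ∈ W ⊓ (f i).eigenspace c := ⟨hvW, End.mem_eigenspace_iff.mpr hv⟩
          rwa [h, Submodule.mem_bot] at this)
      · rintro j w ⟨hwW, hw⟩
        refine ⟨hWinv j w hwW, End.mem_eigenspace_iff.mpr ?_⟩
        have := LinearMap.congr_fun (hf i j).eq w
        simp only [End.mul_apply] at this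
        rw [this, End.mem_eigenspace_iff.mp hw, map_smul]
    intro w hw
    rw [← hE] at hw
    exact End.mem_eigenspace_iff.mp hw.2
  choose χ hχ using key
  obtain ⟨v, hvW, hv0⟩ := Submodule.exists_mem_ne_zero_of_ne_bot hW0
  exact ⟨χ, v, hv0, fun i => hχ i v hvW⟩

/-- Common eigenvectors of a commuting family with pairwise distinct weights are independent. -/
lemma linearIndependent_of_weights {V : Type*} [AddCommGroup V] [Module ℂ V]
    {ι κ : Type*} (f : ι → End ℂ V)
    (hf : ∀ i j, Commute (f i) (f j)) (ψ : κ → ι → ℂ) (hψ : Function.Injective ψ)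
    (v : κ → V) (hv0 : ∀ k, v k ≠ 0) (hv : ∀ k i, f i (v k) = ψ k i • v k) :
    LinearIndependent ℂ v := by
  have hind := End.independent_iInf_maxGenEigenspace_of_forall_mapsTo f
    (fun i j φ => End.mapsTo_maxGenEigenspace_of_comm (hf j i) φ)
  refine (hind.comp hψ).linearIndependent _ (fun k => ?_) hv0
  simp only [Function.comp, Submodule.mem_iInf]
  exact fun i => (End.mem_maxGenEigenspace _ _ _).mpr ⟨1, by simp [hv k i]⟩

/-! ### From a twist to commutativity -/

/-- If `A`, `T` are invertible and `A T = ω T A` for a primitive `n`-th root of unity `ω`, where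
`n = dim V`, then `A` has `n` distinct eigenvalues (`T` multiplies eigenvalues by `ω`), so the centralizer of
`A` is commutative. -/
lemma commute_of_commute_of_twist {V : Type*} [AddCommGroup V] [Module ℂ V]
    [FiniteDimensional ℂ V] [Nontrivial V] {ω : ℂ} (hω : IsPrimitiveRoot ω (finrank ℂ V))
    (A T X Y : End ℂ V) (hA : Function.Injective A) (hT : Function.Injective T)
    (hAT : A * T = ω • (T * A)) (hX : Commute A X) (hY : Commute A Y) : Commute X Y := by
  obtain ⟨c, hc⟩ := End.exists_eigenvalue A
  obtain ⟨v, hv⟩ := hc.exists_hasEigenvector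
  have hc0 : c ≠ 0 := by
    rintro rfl
    exact hv.2 (hA (by simpa using hv.apply_eq_smul))
  have hpow : ∀ k : ℕ, A ((T ^ k) v) = (c * ω ^ k) • (T ^ k) v := by
    intro k
    induction k with
    | zero => simpa using hv.apply_eq_smul
    | succ k ih =>
      have h := LinearMap.congr_fun hAT ((T ^ k) v)
      simp only [End.mul_apply, LinearMap.smul_apply] at h
      rw [pow_succ' T, End.mul_apply, h, ih, map_smul, smul_smul]
      congr 1
      ring
  have hne : ∀ k : ℕ, (T ^ k) v ≠ 0 := by
    intro k
    induction k with
    | zero => simpa using hv.2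
    | succ k ih =>
      rw [pow_succ' T, End.mul_apply]
      exact fun h => ih (hT (by simpa using h))
  have hinj : Function.Injective fun k : Fin (finrank ℂ V) => c * ω ^ (k : ℕ) := by
    intro i j hij
    exact Fin.ext (hω.pow_inj i.2 j.2 (mul_left_cancel₀ hc0 hij))
  have hli := End.eigenvectors_linearIndependent' A _ hinj (fun k => (T ^ (k : ℕ)) v)
    (fun k => ⟨End.mem_eigenspace_iff.mpr (hpow k), hne k⟩)
  have : Nonempty (Fin (finrank ℂ V)) := ⟨⟨0, finrank_pos⟩⟩
  let b := basisOfLinearIndependentOfCardEqFinrank hli (by simp)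
  have hb : ∀ k, A (b k) = (c * ω ^ (k : ℕ)) • b k := fun k => by simpa [b] using hpow k
  have hAcoord : ∀ x i, b.repr (A x) i = (c * ω ^ (i : ℕ)) * b.repr x i := by
    intro x i
    have : (Finsupp.lapply i ∘ₗ b.repr.toLinearMap) ∘ₗ A =
        (c * ω ^ (i : ℕ)) • (Finsupp.lapply i ∘ₗ b.repr.toLinearMap) := by
      refine b.ext fun k => ?_
      by_cases hki : k = i
      · subst hki; simp [hb]
      · simp [hb, hki]
    simpa using LinearMap.congr_fun this x
  have diag : ∀ Z : End ℂ V, Commute A Z → ∀ k, ∃ z : ℂ, Z (b k) = z • b k := by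
    intro Z hZ k
    refine ⟨b.repr (Z (b k)) k, b.ext_elem fun i => ?_⟩
    by_cases hki : k = i
    · subst hki; simp
    · have h1 := LinearMap.congr_fun hZ.eq (b k)
      simp only [End.mul_apply] at h1
      have h2 := hAcoord (Z (b k)) i
      rw [h1, hb, map_smul, map_smul] at h2
      simp only [Finsupp.smul_apply, smul_eq_mul] at h2
      have h3 : b.repr (Z (b k)) i = 0 := by
        by_contra h0
        exact hki (hinj (mul_right_cancel₀ h0 h2))
      simp [h3, hki]
  refine b.ext fun k => ?_
  obtain ⟨x, hx⟩ := diag X hX k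
  obtain ⟨y, hy⟩ := diag Y hY k
  simp [hx, hy, smul_comm x y]

/-! ### From commutativity to a twist -/

/-- An irreducible representation of `π` that is commutative on the kernel of `ε : π → ℤ` is
isomorphic to its twist by `g ↦ ω ^ ε g`, for `ω` any root of unity of order dividing the
dimension. -/
lemma exists_twist_of_commute {π V : Type*} [Group π] [AddCommGroup V] [Module ℂ V]
    [FiniteDimensional ℂ V] [Nontrivial V] {ω : ℂ} (hω : ω ^ finrank ℂ V = 1)
    (ε : π →* Multiplicative ℤ) (hsurj : Function.Surjective ε) (ρ : π →* End ℂ V)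
    (hirr : ∀ W : Submodule ℂ V, (∀ g, ∀ v ∈ W, ρ g v ∈ W) → W = ⊥ ∨ W = ⊤)
    (hcomm : ∀ a ∈ ε.ker, ∀ b ∈ ε.ker, Commute (ρ a) (ρ b)) :
    ∃ A : V ≃ₗ[ℂ] V, ∀ g x, A (ρ g x) = ω ^ Multiplicative.toAdd (ε g) • ρ g (A x) := by
  have hω0 : ω ≠ 0 := by
    rintro rfl
    simp [zero_pow finrank_pos.ne'] at hω
  obtain ⟨t, ht⟩ := hsurj (Multiplicative.ofAdd 1)
  have hmul : ∀ (a b : π) (x : V), ρ a (ρ b x) = ρ (a * b) x := fun a b x => by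
    rw [map_mul, End.mul_apply]
  have hinjρ : ∀ (a : π) (x : V), x ≠ 0 → ρ a x ≠ 0 := by
    intro a x hx h
    apply hx
    have h2 := hmul a⁻¹ a x
    rw [h, map_zero] at h2
    simpa using h2.symm
  have hconj : ∀ (k : ℤ) (h : ε.ker), t ^ (-k) * h * t ^ k ∈ ε.ker := by
    intro k h
    have := (inferInstance : ε.ker.Normal).conj_mem h h.2 (t ^ (-k))
    simpa using this
  obtain ⟨χ, v₀, hv₀, hχ₀⟩ := exists_common_eigenvector (fun h : ε.ker => ρ h)
    (fun a b => hcomm a a.2 b b.2)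
  -- The `t ^ k`-translate of a vector of weight `χ` has weight `ψ k`.
  let ψ : ℤ → ε.ker → ℂ := fun k h => χ ⟨_, hconj k h⟩
  have hψ0 : ψ 0 = χ := by
    funext h
    simp [ψ]
  have htrans : ∀ w : V, (∀ h : ε.ker, ρ h w = χ h • w) →
      ∀ (k : ℤ) (h : ε.ker), ρ h (ρ (t ^ k) w) = ψ k h • ρ (t ^ k) w := by
    intro w hw k h
    have h1 := hw ⟨_, hconj k h⟩
    have h2 := congrArg (ρ (t ^ k)) h1
    rw [map_smul, hmul] at h2
    rw [hmul, ← h2]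
    congr 2
    simp [← mul_assoc]
  have hshift : ∀ i j : ℤ, ψ i = ψ j → ψ (j - i) = ψ 0 := by
    intro i j hij
    funext h
    have h1 := congrFun hij ⟨_, hconj (-i) h⟩
    simp only [ψ] at h1 ⊢
    have e1 : t ^ (-i) * (t ^ (-(-i)) * (h : π) * t ^ (-i)) * t ^ i
        = t ^ (-(0 : ℤ)) * h * t ^ (0 : ℤ) := by
      simp [← mul_assoc]
    have e2 : t ^ (-j) * (t ^ (-(-i)) * (h : π) * t ^ (-i)) * t ^ j
        = t ^ (-(j - i)) * h * t ^ (j - i) := by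
      rw [show -(j - i) = -j + -(-i) by ring, show j - i = -i + j by ring, _root_.zpow_add, _root_.zpow_add]
      simp only [mul_assoc]
    simp only [e1, e2] at h1
    exact h1.symm
  have hindep : ∀ w : V, w ≠ 0 → (∀ h : ε.ker, ρ h w = χ h • w) → ∀ m : ℕ,
      (Function.Injective fun k : Fin m => ψ (k : ℕ)) →
      LinearIndependent ℂ fun k : Fin m => ρ (t ^ ((k : ℕ) : ℤ)) w := by
    intro w hw0 hw m hm
    exact linearIndependent_of_weights (fun h : ε.ker => ρ h) (fun a b => hcomm a a.2 b b.2)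
      _ hm _ (fun k => hinjρ _ _ hw0) (fun k h => htrans w hw _ h)
  have hex : ∃ m : ℕ, 0 < m ∧ ψ m = ψ 0 := by
    by_contra! hno
    have hinj : Function.Injective fun k : Fin (finrank ℂ V + 1) => ψ (k : ℕ) := by
      intro i j hij
      by_contra hne
      rcases lt_or_gt_of_ne hne with h | h
      · refine hno (j - i : ℕ) (by have := Fin.lt_def.mp h; omega) ?_
        rw [Nat.cast_sub (Fin.le_def.mp h.le)]
        exact hshift _ _ hij
      · refine hno (i - j : ℕ) (by have := Fin.lt_def.mp h; omega) ?_
        rw [Nat.cast_sub (Fin.le_def.mp h.le)]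
        exact hshift _ _ hij.symm
    have := (hindep v₀ hv₀ hχ₀ _ hinj).fintype_card_le_finrank
    simp at this
  classical
  obtain ⟨hm0, hm⟩ := Nat.find_spec hex
  have hmin : ∀ k, k < Nat.find hex → ¬ (0 < k ∧ ψ k = ψ 0) := fun k hk => Nat.find_min hex hk
  generalize Nat.find hex = m at hm0 hm hmin
  have hinj : Function.Injective fun k : Fin m => ψ (k : ℕ) := by
    intro i j hij
    by_contra hne
    rcases lt_or_gt_of_ne hne with h | h
    · refine hmin (j - i : ℕ) (by omega) ⟨by have := Fin.lt_def.mp h; omega, ?_⟩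
      rw [Nat.cast_sub (Fin.le_def.mp h.le)]
      exact hshift _ _ hij
    · refine hmin (i - j : ℕ) (by omega) ⟨by have := Fin.lt_def.mp h; omega, ?_⟩
      rw [Nat.cast_sub (Fin.le_def.mp h.le)]
      exact hshift _ _ hij.symm
  -- `t ^ m` preserves the weight space of `χ`, so it has an eigenvector there.
  obtain ⟨c, v, hvW, hv0, hcv⟩ := exists_eigenvector_mem
    (⨅ h : ε.ker, End.eigenspace (ρ h) (χ h))
    (fun hbot => hv₀ (by
      have : v₀ ∈ (⨅ h : ε.ker, End.eigenspace (ρ h) (χ h)) := by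
        simpa only [Submodule.mem_iInf, End.mem_eigenspace_iff] using hχ₀
      rwa [hbot, Submodule.mem_bot] at this))
    (ρ (t ^ (m : ℤ))) (by
      intro w hw
      simp only [Submodule.mem_iInf, End.mem_eigenspace_iff] at hw ⊢
      intro h
      rw [htrans w hw m h, hm, hψ0])
  simp only [Submodule.mem_iInf, End.mem_eigenspace_iff] at hvW
  have hc0 : c ≠ 0 := by
    rintro rfl
    exact hinjρ _ _ hv0 (hcv.trans (zero_smul ℂ v))
  have hcq : ∀ q : ℤ, ρ ((t ^ (m : ℤ)) ^ q) v = c ^ q • v := by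
    intro q
    induction q using Int.induction_on with
    | zero => simp
    | succ i ih =>
      rw [_root_.zpow_add_one, ← hmul, hcv, map_smul, ih, smul_smul, zpow_add_one₀ hc0, mul_comm]
    | pred i ih =>
      have h1 : ρ ((t ^ (m : ℤ))⁻¹) v = c⁻¹ • v := by
        have h2 := congrArg (ρ ((t ^ (m : ℤ))⁻¹)) hcv
        rw [hmul, map_smul] at h2
        simp only [inv_mul_cancel, map_one, End.one_apply] at h2
        rw [h2, smul_smul, inv_mul_cancel₀ hc0, one_smul, ← h2]
      rw [_root_.zpow_sub_one, ← hmul, h1, map_smul, ih, smul_smul, zpow_sub_one₀ hc0, mul_comm]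
  have hred : ∀ j : ℤ, ∃ (q : ℤ) (r : Fin m), j = m * q + (r : ℕ) ∧
      ρ (t ^ j) v = c ^ q • ρ (t ^ ((r : ℕ) : ℤ)) v := by
    intro j
    have hm' : (m : ℤ) ≠ 0 := by exact_mod_cast hm0.ne'
    have hr0 := Int.emod_nonneg j hm'
    have hrm := Int.emod_lt_of_pos j (by exact_mod_cast hm0 : (0 : ℤ) < m)
    obtain ⟨r, hr⟩ := Int.eq_ofNat_of_zero_le hr0
    have hj : j = m * (j / m) + (r : ℤ) := by
      rw [← hr]; exact (Int.mul_ediv_add_emod j m).symm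
    refine ⟨j / m, ⟨r, by omega⟩, hj, ?_⟩
    conv_lhs => rw [hj, add_comm, _root_.zpow_add, _root_.zpow_mul, ← hmul, hcq, map_smul]
  have hdecomp : ∀ g : π, ∃ h : ε.ker, g = t ^ Multiplicative.toAdd (ε g) * h := by
    intro g
    refine ⟨⟨(t ^ Multiplicative.toAdd (ε g))⁻¹ * g, ?_⟩, by simp⟩
    rw [MonoidHom.mem_ker, map_mul, map_inv, map_zpow, ht, ← ofAdd_zsmul]
    simp
  have hgj : ∀ (g : π) (j : ℤ), ∃ z : ℂ,
      ρ g (ρ (t ^ j) v) = z • ρ (t ^ (Multiplicative.toAdd (ε g) + j)) v := by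
    intro g j
    obtain ⟨h, hh⟩ := hdecomp g
    refine ⟨ψ j h, ?_⟩
    conv_lhs => rw [hh, ← hmul, htrans v hvW j h, map_smul, hmul, ← _root_.zpow_add]
  -- The orbit of `v` under the powers of `t` spans, by irreducibility.
  have hspanZ : Submodule.span ℂ (Set.range fun j : ℤ => ρ (t ^ j) v) = ⊤ := by
    refine (hirr _ fun g w hw => ?_).resolve_left fun hbot => ?_
    · rw [← Submodule.mem_comap]
      refine Submodule.span_le.mpr ?_ hw
      rintro _ ⟨j, rfl⟩
      obtain ⟨z, hz⟩ := hgj g j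
      rw [SetLike.mem_coe, Submodule.mem_comap]
      simp only [hz]
      exact Submodule.smul_mem _ _ (Submodule.subset_span ⟨_, rfl⟩)
    · have : ρ (t ^ (0 : ℤ)) v ∈ (⊥ : Submodule ℂ V) :=
        hbot ▸ Submodule.subset_span ⟨0, rfl⟩
      exact hv0 (by simpa using this)
  have hspan : ⊤ ≤ Submodule.span ℂ (Set.range fun k : Fin m => ρ (t ^ ((k : ℕ) : ℤ)) v) := by
    rw [← hspanZ, Submodule.span_le]
    rintro _ ⟨j, rfl⟩
    obtain ⟨q, r, -, h⟩ := hred j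
    simp only [SetLike.mem_coe, h]
    exact Submodule.smul_mem _ _ (Submodule.subset_span ⟨r, rfl⟩)
  let b := Basis.mk (hindep v hv0 hvW m hinj) hspan
  have hb : ∀ k, b k = ρ (t ^ ((k : ℕ) : ℤ)) v := fun k => Basis.mk_apply _ _ k
  have hmn : ω ^ m = 1 := by
    rw [← hω, finrank_eq_card_basis b, Fintype.card_fin]
  let A : V ≃ₗ[ℂ] V :=
    b.equiv (b.unitsSMul fun k => Units.mk0 (ω ^ (k : ℕ)) (pow_ne_zero _ hω0)) (Equiv.refl _)
  have hAb : ∀ k, A (b k) = ω ^ (k : ℕ) • b k := by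
    intro k
    simp [A, Basis.unitsSMul_apply, Units.smul_def]
  have hAj : ∀ j : ℤ, A (ρ (t ^ j) v) = ω ^ j • ρ (t ^ j) v := by
    intro j
    obtain ⟨q, r, hj, h⟩ := hred j
    rw [h, map_smul, ← hb, hAb, smul_comm, hj, zpow_add₀ hω0, _root_.zpow_mul, zpow_natCast, hmn]
    simp
  refine ⟨A, fun g x => ?_⟩
  suffices A.toLinearMap ∘ₗ ρ g = ω ^ Multiplicative.toAdd (ε g) • (ρ g ∘ₗ A.toLinearMap) by
    simpa using LinearMap.congr_fun this x
  refine b.ext fun k => ?_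
  obtain ⟨z, hz⟩ := hgj g (k : ℕ)
  simp only [LinearMap.comp_apply, LinearMap.smul_apply, LinearEquiv.coe_coe]
  rw [hb, hAj, hz, map_smul, hAj, map_smul, hz, zpow_add₀ hω0]
  simp only [smul_smul]
  congr 1
  ring

/-! ### Translation to matrices -/

/-- Let `ε : π → ℤ` be a surjective homomorphism whose kernel is the
commutator subgroup `[π,π]`, let `ω = e^{2πi/n}`, and let `α : π → SL(n,ℂ)` be an
irreducible representation.  Then `α` is conjugate to its twist
`g ↦ ω^{ε(g)} α(g)` if and only if `α` is metabelian, i.e. trivial on the second derived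
subgroup `π⁽²⁾`. -/
theorem fixed_by_twist_iff_metabelian {π : Type*} [Group π]
    (ε : π →* Multiplicative ℤ) (hsurj : Function.Surjective ε)
    (hker : ε.ker = derivedSeries π 1)
    (n : ℕ) [NeZero n] (α : π →* Matrix.SpecialLinearGroup (Fin n) ℂ)
    (hirr : ∀ W : Submodule ℂ (Fin n → ℂ),
      (∀ (g : π) (v : Fin n → ℂ), v ∈ W →
        (α g : Matrix (Fin n) (Fin n) ℂ).mulVec v ∈ W) → W = ⊥ ∨ W = ⊤) :
    (∃ A : GL (Fin n) ℂ, ∀ g : π,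
      (A : Matrix (Fin n) (Fin n) ℂ) * (α g : Matrix (Fin n) (Fin n) ℂ) *
          ((A⁻¹ : GL (Fin n) ℂ) : Matrix (Fin n) (Fin n) ℂ) =
        Complex.exp (2 * Real.pi * Complex.I / n) ^ Multiplicative.toAdd (ε g) •
          (α g : Matrix (Fin n) (Fin n) ℂ)) ↔
    (∀ g ∈ derivedSeries π 2, α g = 1) := by
  have hn : n ≠ 0 := NeZero.ne n
  have : Nonempty (Fin n) := ⟨⟨0, Nat.pos_of_ne_zero hn⟩⟩
  have hω := Complex.isPrimitiveRoot_exp n hn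
  generalize Complex.exp (2 * Real.pi * Complex.I / n) = ω at hω ⊢
  have hfin : finrank ℂ (Fin n → ℂ) = n := by simp
  have hder : derivedSeries π 2 = ⁅ε.ker, ε.ker⁆ := by
    rw [hker, derivedSeries_succ]
  rw [hder]
  constructor
  · rintro ⟨A, hA⟩ g hg
    have hA' : ∀ g, (A : Matrix (Fin n) (Fin n) ℂ) * (α g : Matrix (Fin n) (Fin n) ℂ) =
        ω ^ Multiplicative.toAdd (ε g) • ((α g : Matrix (Fin n) (Fin n) ℂ) * A) := by
      intro g
      rw [← Matrix.smul_mul, ← hA g, Matrix.mul_assoc, ← Units.val_mul, inv_mul_cancel,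
        Units.val_one, Matrix.mul_one]
    obtain ⟨t, ht⟩ := hsurj (Multiplicative.ofAdd 1)
    have hcent : ∀ a ∈ ε.ker, Commute (Matrix.toLin' (A : Matrix (Fin n) (Fin n) ℂ))
        (Matrix.toLin' (α a : Matrix (Fin n) (Fin n) ℂ)) := by
      intro a ha
      have := hA' a
      rw [MonoidHom.mem_ker.mp ha] at this
      simp only [toAdd_one, zpow_zero, one_smul] at this
      simp only [Commute, SemiconjBy, End.mul_eq_comp,
        ← Matrix.toLin'_mul, this]
    suffices ⁅ε.ker, ε.ker⁆ ≤ α.ker from this hg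
    rw [Subgroup.commutator_le]
    intro a ha b hb
    rw [MonoidHom.mem_ker, map_commutatorElement, commutatorElement_eq_one_iff_mul_comm]
    have hcomm := commute_of_commute_of_twist (ω := ω) (by rwa [hfin])
      (Matrix.toLin' (A : Matrix (Fin n) (Fin n) ℂ))
      (Matrix.toLin' (α t : Matrix (Fin n) (Fin n) ℂ)) _ _
      (Matrix.mulVec_injective_of_isUnit A.isUnit)
      (Matrix.mulVec_injective_of_isUnit
        ((Matrix.isUnit_iff_isUnit_det _).mpr (by simp)))
      (by
        have := hA' t
        rw [ht, toAdd_ofAdd, zpow_one] at this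
        rw [End.mul_eq_comp, End.mul_eq_comp, ← Matrix.toLin'_mul, this, map_smul,
          Matrix.toLin'_mul])
      (hcent a ha) (hcent b hb)
    have h := hcomm.eq
    rw [End.mul_eq_comp, End.mul_eq_comp, ← Matrix.toLin'_mul, ← Matrix.toLin'_mul] at h
    exact Subtype.ext (by simpa using Matrix.toLin'.injective h)
  · intro hmet
    let ρ : π →* End ℂ (Fin n → ℂ) :=
      { toFun := fun g => Matrix.toLin' (α g : Matrix (Fin n) (Fin n) ℂ)
        map_one' := by simp [End.one_eq_id]
        map_mul' := fun a b => by simp [End.mul_eq_comp, Matrix.toLin'_mul] }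
    have hρ : ∀ g x, ρ g x = (α g : Matrix (Fin n) (Fin n) ℂ).mulVec x := fun g x => by
      simp [ρ]
    obtain ⟨A, hA⟩ := exists_twist_of_commute (ω := ω) (by rw [hfin]; exact hω.pow_eq_one)
      ε hsurj ρ (fun W hW => hirr W fun g v hv => by simpa [hρ] using hW g v hv)
      (by
        intro a ha b hb
        have h := hmet _ (Subgroup.commutator_mem_commutator ha hb)
        rw [map_commutatorElement, commutatorElement_eq_one_iff_mul_comm] at h
        have h2 := congrArg (fun M : Matrix.SpecialLinearGroup (Fin n) ℂ =>
          Matrix.toLin' (M : Matrix (Fin n) (Fin n) ℂ)) h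
        simpa [Commute, SemiconjBy, ρ, End.mul_eq_comp, Matrix.toLin'_mul] using h2)
    let B : GL (Fin n) ℂ :=
      ⟨LinearMap.toMatrix' A.toLinearMap, LinearMap.toMatrix' A.symm.toLinearMap,
        by rw [← LinearMap.toMatrix'_comp]; simp, by rw [← LinearMap.toMatrix'_comp]; simp⟩
    refine ⟨B, fun g => ?_⟩
    have h1 : (B : Matrix (Fin n) (Fin n) ℂ) * (α g : Matrix (Fin n) (Fin n) ℂ) =
        ω ^ Multiplicative.toAdd (ε g) • ((α g : Matrix (Fin n) (Fin n) ℂ) * B) := by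
      apply Matrix.toLin'.injective
      refine LinearMap.ext fun x => ?_
      have := hA g x
      rw [hρ, hρ] at this
      simpa [B, Matrix.toLin'_mul] using this
    rw [h1, Matrix.smul_mul, Matrix.mul_assoc, ← Units.val_mul, mul_inv_cancel, Units.val_one,
      Matrix.mul_one]
end
end
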